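/- arXiv:1308.5515 — 5 statements merged into one kernel-verified Lean document; each statement's English description precedes it below -/
import Mathlib

section
/- Suppose X is a topological space, Γ is a group acting on X such that each γ ∈ Γ acts as a homeomorphism of X, Y ⊆ X is Γ-invariant, and 𝒰 is the family of open sets U ⊆ X for which there is no finite set Δ ⊆ Γ with Y ⊆ Δ·U. Then for every I_𝒰-positive set F ⊆ X and every open set W ⊇ F, there is a finite set Δ ⊆ Γ such that: whenever I is a finite index set, (F_i)_{i∈I} is a family of subsets of X whose union contains F, and (λ_i)_{i∈I} is a family of elements of Γ, there exist δ ∈ Δ and i ∈ I for which the set closure(δ·W) ∩ (λ_i·F_i) is I_𝒰-positive. -/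
/-!
Say that `A` is *syndetic* if finitely many translates of `A` cover `Y`; then `𝒰` consists of the
open non-syndetic sets. Positivity of `F` yields `U ∈ 𝒰` such that `V ∪ U` is syndetic for every
open `V ⊇ F`. With `V = W` this provides the finite set `Δ` with `Y ⊆ Δ • (W ∪ U)`.

Suppose all the sets `closure (δ • W) ∩ λ_i • F_i` were in `I_𝒰`. As `I_𝒰` is closed under finite
unions (`exists_open_union_mem`), a single open `V` contains all of them, with `V ∪ U ∈ 𝒰`. Put
`O = X \ ⋃ δ ∈ Δ, closure (δ • W)`, an open set. Each `λ_i • F_i` is contained in `V ∪ O`, so the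
open set `⋃ i, λ_i⁻¹ • (V ∪ O)` contains `F` and its union with `U` is syndetic. Hence
`V ∪ O ∪ U` is syndetic. But `O` misses `Δ • W`, so `O ∩ Y ⊆ Δ • U`, and therefore `V ∪ U` is
already syndetic (`cover_trans`, which uses the invariance of `Y`), a contradiction.
-/

open Pointwise

/-- Membership in the family `I_𝒰` associated to a family `𝒰` of open subsets of `X`:
`F ∈ I_𝒰` iff for every `U ∈ 𝒰` there exists an open set `V ⊇ F` with `V ∪ U ∈ 𝒰`. -/
def MemIdealU {X : Type*} [TopologicalSpace X] (𝒰 : Set (Set X)) (F : Set X) : Prop :=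
  ∀ U ∈ 𝒰, ∃ V : Set X, IsOpen V ∧ F ⊆ V ∧ V ∪ U ∈ 𝒰

/-- If finitely many translates of `A` cover the invariant set `Y`, and finitely many translates
of `B` cover `A ∩ Y`, then finitely many translates of `B` cover `Y`. -/
theorem cover_trans {X Γ : Type*} [Group Γ] [MulAction Γ X] {Y A B : Set X}
    (hY : ∀ γ : Γ, γ • Y = Y)
    (hA : ∃ Δ : Finset Γ, Y ⊆ ⋃ δ ∈ Δ, δ • A)
    (hB : ∃ E : Finset Γ, A ∩ Y ⊆ ⋃ δ ∈ E, δ • B) :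
    ∃ Δ : Finset Γ, Y ⊆ ⋃ δ ∈ Δ, δ • B := by
  classical
  obtain ⟨Δ, hΔ⟩ := hA
  obtain ⟨E, hE⟩ := hB
  refine ⟨Δ * E, fun y hy => ?_⟩
  obtain ⟨d, hd, z, hz, rfl⟩ := Set.mem_iUnion₂.1 (hΔ hy)
  have hzY : z ∈ Y := by
    rw [← hY d] at hy
    exact Set.smul_mem_smul_set_iff.1 hy
  obtain ⟨e, he, b, hb, rfl⟩ := Set.mem_iUnion₂.1 (hE ⟨hz, hzY⟩)
  exact Set.mem_iUnion₂.2 ⟨d * e, Finset.mul_mem_mul hd he, b, hb, mul_smul d e b⟩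

/-- `I_𝒰` is closed under finite unions: the union of finitely many members again has, for each
`U ∈ 𝒰`, an open neighbourhood `V` with `V ∪ U ∈ 𝒰`. -/
theorem exists_open_union_mem {X J : Type*} [TopologicalSpace X] {𝒰 : Set (Set X)}
    (s : Finset J) (A : J → Set X) (hA : ∀ j ∈ s, MemIdealU 𝒰 (A j)) {U : Set X} (hU : U ∈ 𝒰) :
    ∃ V : Set X, IsOpen V ∧ (∀ j ∈ s, A j ⊆ V) ∧ V ∪ U ∈ 𝒰 := by
  classical
  induction s using Finset.induction_on with
  | empty => exact ⟨∅, isOpen_empty, by simp, by simpa using hU⟩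
  | insert a s _ ih =>
    obtain ⟨V, hV, hsub, hVU⟩ := ih fun j hj => hA j (Finset.mem_insert_of_mem hj)
    obtain ⟨V', hV', hsub', hVU'⟩ := hA a (Finset.mem_insert_self a s) _ hVU
    refine ⟨V' ∪ V, hV'.union hV, fun j hj => ?_, by rwa [Set.union_assoc]⟩
    rcases Finset.mem_insert.1 hj with rfl | hj
    · exact hsub'.trans Set.subset_union_left
    · exact (hsub j hj).trans Set.subset_union_right

/-- the splitting proposition. If `Γ` is a group of homeomorphisms of `X`,
`Y` is `Γ`-invariant, and `𝒰` is the family of open sets no finitely many `Γ`-translates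
of which cover `Y`, then for every `I_𝒰`-positive `F` and open `W ⊇ F` there is a finite
`Δ ⊆ Γ` such that for every finite family `(F_i)_{i ∈ I}` covering `F` and every family
`(λ_i)_{i ∈ I}` in `Γ`, some `closure (δ • W) ∩ λ_i • F_i` is `I_𝒰`-positive. -/
theorem statement2 {X Γ : Type*} [TopologicalSpace X] [Group Γ] [MulAction Γ X]
    (hcont : ∀ γ : Γ, Continuous fun x : X => γ • x)
    (Y : Set X) (hY : ∀ γ : Γ, γ • Y = Y)
    (𝒰 : Set (Set X))
    (h𝒰 : 𝒰 = {U : Set X | IsOpen U ∧ ¬∃ Δ : Finset Γ, Y ⊆ ⋃ δ ∈ Δ, δ • U})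
    (F W : Set X) (hFpos : ¬ MemIdealU 𝒰 F) (hW : IsOpen W) (hFW : F ⊆ W) :
    ∃ Δ : Finset Γ, ∀ (ι : Type) (I : Finset ι) (Fam : ι → Set X) (lam : ι → Γ),
      F ⊆ ⋃ i ∈ I, Fam i →
      ∃ δ ∈ Δ, ∃ i ∈ I, ¬ MemIdealU 𝒰 (closure (δ • W) ∩ lam i • Fam i) := by
  classical
  unfold MemIdealU at hFpos
  push Not at hFpos
  obtain ⟨U, hU, hUF⟩ := hFpos
  have hUo : IsOpen U := by rw [h𝒰] at hU; exact hU.1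
  have key : ∀ V : Set X, IsOpen V → F ⊆ V → ∃ Δ : Finset Γ, Y ⊆ ⋃ δ ∈ Δ, δ • (V ∪ U) := by
    intro V hV hFV
    by_contra hcon
    exact hUF V hV hFV (by rw [h𝒰]; exact ⟨hV.union hUo, hcon⟩)
  obtain ⟨Δ, hΔ⟩ := key W hW hFW
  refine ⟨Δ, fun ι I Fam lam hcov => ?_⟩
  by_contra! hall
  obtain ⟨V, hV, hsub, hVU⟩ := exists_open_union_mem (Δ ×ˢ I)
    (fun p => closure (p.1 • W) ∩ lam p.2 • Fam p.2)
    (fun p hp => hall p.1 (Finset.mem_product.1 hp).1 p.2 (Finset.mem_product.1 hp).2) hU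
  rw [h𝒰] at hVU
  refine hVU.2 ?_
  set O : Set X := (⋃ δ ∈ Δ, closure (δ • W))ᶜ with hO
  have hOo : IsOpen O :=
    (Δ.finite_toSet.isClosed_biUnion fun δ _ => isClosed_closure).isOpen_compl
  have hFV : F ⊆ ⋃ i ∈ I, (fun x => lam i • x) ⁻¹' (V ∪ O) := by
    intro x hx
    obtain ⟨i, hi, hxi⟩ := Set.mem_iUnion₂.1 (hcov hx)
    refine Set.mem_iUnion₂.2 ⟨i, hi, ?_⟩
    by_cases hxO : lam i • x ∈ O
    · exact Or.inr hxO
    · rw [hO, Set.notMem_compl_iff] at hxO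
      obtain ⟨δ, hδ, hxδ⟩ := Set.mem_iUnion₂.1 hxO
      exact Or.inl (hsub (δ, i) (Finset.mem_product.2 ⟨hδ, hi⟩)
        ⟨hxδ, Set.smul_mem_smul_set hxi⟩)
  have hsynd := key _ (isOpen_biUnion fun i _ => (hV.union hOo).preimage (hcont (lam i))) hFV
  have hsynd' : ∃ Δ : Finset Γ, Y ⊆ ⋃ δ ∈ Δ, δ • (V ∪ O ∪ U) := by
    refine cover_trans hY hsynd ⟨insert 1 (I.image fun i => (lam i)⁻¹), ?_⟩
    rintro x ⟨hx | hx, -⟩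
    · obtain ⟨i, hi, hxi⟩ := Set.mem_iUnion₂.1 hx
      exact Set.mem_iUnion₂.2 ⟨(lam i)⁻¹,
        Finset.mem_insert_of_mem (Finset.mem_image_of_mem _ hi),
        lam i • x, Or.inl hxi, inv_smul_smul _ _⟩
    · exact Set.mem_iUnion₂.2 ⟨1, Finset.mem_insert_self _ _, x, Or.inr hx, one_smul _ _⟩
  refine cover_trans hY hsynd' ⟨insert 1 Δ, ?_⟩
  rintro x ⟨(hx | hx) | hx, hxY⟩
  · exact Set.mem_iUnion₂.2 ⟨1, Finset.mem_insert_self _ _, x, Or.inl hx, one_smul _ _⟩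
  · obtain ⟨δ, hδ, w, hw | hw, rfl⟩ := Set.mem_iUnion₂.1 (hΔ hxY)
    · exact absurd (Set.mem_iUnion₂.2 ⟨δ, hδ, subset_closure (Set.smul_mem_smul_set hw)⟩) hx
    · exact Set.mem_iUnion₂.2 ⟨δ, Finset.mem_insert_of_mem hδ, w, Or.inr hw, rfl⟩
  · exact Set.mem_iUnion₂.2 ⟨1, Finset.mem_insert_self _ _, x, Or.inr hx, one_smul _ _⟩
end

section
/- Suppose X is a complete metric space, Γ is a group acting on X such that each γ ∈ Γ acts as a homeomorphism of X, Y ⊆ X is Γ-invariant, 𝒰 is the family of open sets U ⊆ X for which there is no finite set Δ ⊆ Γ with Y ⊆ Δ·U, (R_n)_{n∈ℕ} is an increasing sequence of reflexive symmetric closed subsets of X × X, and K ⊆ X is a compact I_𝒰-positive set such that: (a) for all n ∈ ℕ and all x ∈ K there exists γ ∈ Γ with ¬(x R_n^{(4)} γ·x); and (b) for all γ ∈ Γ there exists n ∈ ℕ such that x R_n γ·x for all x ∈ Γ·K. Then there exist x ∈ K and a continuous injective map φ : 2^ℕ → X whose range is contained in the closure of the orbit Γ·x, such that for all c, d ∈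 2^ℕ: if c E₀ d then φ(c) and φ(d) are in the same Γ-orbit, and if ¬(c E₀ d) then (φ(c), φ(d)) ∉ ⋃_{n∈ℕ} R_n. -/
/-!
The proof has two parts: finding an almost periodic point of `K`, and building a Cantor scheme from
its returns.

Let `U ∈ 𝒰` witness that `K` is positive. The sets whose union with finitely many translates of `U`
covers `Y` form a proper `Γ`-invariant filter, and finitely many translates of any open `V ⊇ K`
belong to it. Refine it to a minimal proper invariant filter `F`
(`exists_minimal_invariantFilter`); this amounts to a minimal closed invariant set of ultrafilters
and makes up for the lack of compactness of `X` and `Y`. Compactness of `K` provides a cluster point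
`x ∈ K` of `F`. By minimality, each neighbourhood `V` of `x` has finitely many translates forming a
member of `F`; all points of `Γ • x` are cluster points of `F` too, so finitely many translates of
`V` cover `Γ • x` (`exists_syndetic_point`).

For such `x`, any neighbourhood `V`, finite `S ⊆ Γ` and `n`, some `γ` has `γ • x ∈ V` and
`(s • γ • x, t • x) ∉ R n` for all `s, t ∈ S`: otherwise hypothesis (b), applied to `S` and to the
finitely many translations covering the orbit, would give one `m` such that all points of `Γ • x`
are related to `x` by the fourth power of `R m`, against (a). Choosing `γ n` recursively in this
manner, with shrinking balls around `x`, the map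
`φ c = lim γ₀ ^ c₀ * ⋯ * γₙ ^ cₙ • x` is continuous, satisfies `(φ c, φ d) ∉ R n` whenever
`c n ≠ d n`, and sends eventually equal sequences to one orbit (`exists_cantor_of_separation`).
-/

open Pointwise

/-- The `k`-fold composition `R^{(k)}` of a relation `R ⊆ X × X`. -/
def relPow {X : Type*} (R : Set (X × X)) : ℕ → Set (X × X)
  | 0 => {p | p.1 = p.2}
  | k + 1 => {p | ∃ z, (p.1, z) ∈ relPow R k ∧ (z, p.2) ∈ R}

/-- The equivalence relation `E₀` of eventual equality on Cantor space `2^ℕ`. -/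
def E0 (c d : ℕ → Bool) : Prop := ∃ N, ∀ n ≥ N, c n = d n

/-! ### The Cantor scheme -/

open Set Filter Topology in
/-- One step of the construction. If every neighbourhood of `x` contains some `γ • x` separated by
`R n` from `x` up to the elements of `S`, then `γ` and a radius `r'` can be chosen so that the
separation holds on all of `closedBall x r'`, which `γ` maps into `closedBall x r`, and on which
`s` and `s * γ`, for `s ∈ S`, stay within `(1 / 2) ^ n` of their value at `x`. -/
theorem exists_return_step {X Γ : Type*} [MetricSpace X]
    [Group Γ] [MulAction Γ X]
    (hcont : ∀ γ : Γ, Continuous fun x : X => γ • x)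
    (R : ℕ → Set (X × X))
    (hclosed : ∀ n, IsClosed (R n)) (x : X)
    (hsep : ∀ (S : Finset Γ) (n : ℕ) (V : Set X), IsOpen V → x ∈ V →
      ∃ γ : Γ, γ • x ∈ V ∧ ∀ s ∈ S, ∀ t ∈ S, (s • γ • x, t • x) ∉ R n)
    (S : Finset Γ) (n : ℕ) (r : ℝ) (hr : 0 < r) :
    ∃ (γ : Γ) (r' : ℝ), 0 < r' ∧ r' ≤ r ∧
      (∀ y ∈ Metric.closedBall x r', γ • y ∈ Metric.closedBall x r) ∧
      (∀ s ∈ S, ∀ y ∈ Metric.closedBall x r',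
        dist (s • y) (s • x) < (1 / 2) ^ n ∧ dist (s • γ • y) (s • γ • x) < (1 / 2) ^ n) ∧
      (∀ s ∈ S, ∀ t ∈ S, ∀ y ∈ Metric.closedBall x r', ∀ z ∈ Metric.closedBall x r',
        (s • γ • y, t • z) ∉ R n) := by
  obtain ⟨γ, hγ, hγS⟩ := hsep S n (Metric.ball x r) Metric.isOpen_ball (Metric.mem_ball_self hr)
  have h1 : ∀ᶠ y in 𝓝 x, γ • y ∈ Metric.ball x r :=
    (hcont γ).continuousAt.eventually (Metric.isOpen_ball.mem_nhds hγ)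
  have h2 : ∀ᶠ y in 𝓝 x, ∀ s ∈ S,
      dist (s • y) (s • x) < (1 / 2) ^ n ∧ dist (s • γ • y) (s • γ • x) < (1 / 2) ^ n := by
    rw [eventually_all_finset]
    intro s _
    have hp : (0 : ℝ) < (1 / 2) ^ n := by positivity
    exact ((hcont s).continuousAt.eventually (Metric.ball_mem_nhds _ hp)).and
      (((hcont s).comp (hcont γ)).continuousAt.eventually (Metric.ball_mem_nhds _ hp))
  have h3 : ∀ᶠ p in 𝓝 x ×ˢ 𝓝 x, ∀ s ∈ S, ∀ t ∈ S, (s • γ • p.1, t • p.2) ∉ R n := by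
    rw [eventually_all_finset]
    intro s hs
    rw [eventually_all_finset]
    intro t ht
    have hc : Continuous fun p : X × X => (s • γ • p.1, t • p.2) :=
      (((hcont s).comp (hcont γ)).comp continuous_fst).prodMk ((hcont t).comp continuous_snd)
    rw [← nhds_prod_eq]
    exact (hc.continuousAt (x := (x, x))).eventually
      ((hclosed n).isOpen_compl.mem_nhds (hγS s hs t ht))
  obtain ⟨ra, hra, ha⟩ := Metric.nhds_basis_closedBall.mem_iff.1 (h1.and h2)
  obtain ⟨rb, hrb, hb⟩ := (Metric.nhds_basis_closedBall.prod_self).mem_iff.1 h3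
  refine ⟨γ, min r (min ra rb), by positivity, min_le_left _ _, ?_, ?_, ?_⟩
  · intro y hy
    exact Metric.ball_subset_closedBall
      (ha (Metric.closedBall_subset_closedBall ((min_le_right _ _).trans (min_le_left _ _)) hy)).1
  · intro s hs y hy
    exact (ha (Metric.closedBall_subset_closedBall
      ((min_le_right _ _).trans (min_le_left _ _)) hy)).2 s hs
  · intro s hs t ht y hy z hz
    have hsub := Metric.closedBall_subset_closedBall (x := x)
      ((min_le_right r (min ra rb)).trans (min_le_right ra rb))
    exact hb (show (y, z) ∈ _ from ⟨hsub hy, hsub hz⟩) s hs t ht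

/-- The product `γ₀ ^ c₀ * γ₁ ^ c₁ * ⋯ * γₙ₋₁ ^ cₙ₋₁` along the first `n` digits of `c`. -/
def branch {Γ : Type*} [Group Γ] (γ : ℕ → Γ) : ℕ → (ℕ → Bool) → Γ
  | 0, _ => 1
  | n + 1, c => branch γ n c * (if c n then γ n else 1)

theorem branch_congr {Γ : Type*} [Group Γ] (γ : ℕ → Γ) (c d : ℕ → Bool) (n : ℕ)
    (h : ∀ i < n, c i = d i) : branch γ n c = branch γ n d := by
  induction n with
  | zero => rfl
  | succ n ih =>
    rw [branch, branch, ih fun i hi => h i (by omega), h n (by omega)]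

/-- If `c` and `d` agree from `N` on, one and the same group element carries all longer products
along `c` to those along `d`. -/
theorem branch_tail {Γ : Type*} [Group Γ] (γ : ℕ → Γ) (c d : ℕ → Bool) (N : ℕ)
    (h : ∀ i ≥ N, c i = d i) (k : ℕ) :
    (branch γ N d * (branch γ N c)⁻¹) * branch γ (N + k) c = branch γ (N + k) d := by
  induction k with
  | zero => simp
  | succ k ih =>
    rw [← add_assoc, branch, branch, ← ih, h (N + k) (by omega), ← mul_assoc]

open Set Filter Topology in
/-- The Cantor scheme: if arbitrarily small returns `γ • x` of `x` can be separated from `x` by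
every `R n`, up to finitely many group elements, then `c ↦ lim branch γ n c • x` is the required
embedding for a suitable sequence `γ`. -/
theorem exists_cantor_of_separation {X Γ : Type*} [MetricSpace X] [CompleteSpace X]
    [Group Γ] [MulAction Γ X]
    (hcont : ∀ γ : Γ, Continuous fun x : X => γ • x)
    (R : ℕ → Set (X × X))
    (hmono : ∀ n, R n ⊆ R (n + 1))
    (hrefl : ∀ n, ∀ x : X, (x, x) ∈ R n)
    (hsymm : ∀ n, ∀ x y : X, (x, y) ∈ R n → (y, x) ∈ R n)
    (hclosed : ∀ n, IsClosed (R n)) (x : X)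
    (hsep : ∀ (S : Finset Γ) (n : ℕ) (V : Set X), IsOpen V → x ∈ V →
      ∃ γ : Γ, γ • x ∈ V ∧ ∀ s ∈ S, ∀ t ∈ S, (s • γ • x, t • x) ∉ R n) :
    ∃ φ : (ℕ → Bool) → X,
      Continuous φ ∧ Function.Injective φ ∧
      (∀ c, φ c ∈ closure (Set.range fun γ : Γ => γ • x)) ∧
      (∀ c d, E0 c d → ∃ γ : Γ, γ • φ c = φ d) ∧
      (∀ c d, ¬ E0 c d → ∀ n, (φ c, φ d) ∉ R n) := by
  classical
  have hstep := exists_return_step hcont R hclosed x hsep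
  choose! G ρ hρ hρle hball hdist hR using hstep
  -- Stage `n` consists of a finite set containing all `branch γ n c`, and of a radius.
  let st : ℕ → Finset Γ × ℝ := fun n => Nat.rec (({1} : Finset Γ), (1 : ℝ))
    (fun n p => (p.1 ∪ p.1.image (· * G p.1 n p.2), ρ p.1 n p.2)) n
  let S : ℕ → Finset Γ := fun n => (st n).1
  let r : ℕ → ℝ := fun n => (st n).2
  let γ : ℕ → Γ := fun n => G (S n) n (r n)
  have hS : ∀ n, S (n + 1) = S n ∪ (S n).image (· * γ n) := fun n => rfl
  have hr : ∀ n, r (n + 1) = ρ (S n) n (r n) := fun n => rfl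
  have hrpos : ∀ n, 0 < r n := by
    intro n
    induction n with
    | zero => exact one_pos
    | succ n ih => rw [hr]; exact hρ _ _ _ ih
  have hrle : ∀ n, r (n + 1) ≤ r n := fun n => hρle _ _ _ (hrpos n)
  have hmem : ∀ n c, branch γ n c ∈ S n := by
    intro n c
    induction n with
    | zero => exact Finset.mem_singleton_self _
    | succ n ih =>
      rw [hS, branch, Finset.mem_union, Finset.mem_image]
      cases c n
      · simpa using Or.inl ih
      · simpa using Or.inr ih
  -- The sets `branch γ n c • closedBall x (r n)` decrease with `n`.
  have hnest : ∀ n k c, ∃ y ∈ Metric.closedBall x (r n),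
      branch γ (n + k) c • x = branch γ n c • y := by
    have key : ∀ k n c, ∀ z ∈ Metric.closedBall x (r (n + k)), ∃ y ∈ Metric.closedBall x (r n),
        branch γ (n + k) c • z = branch γ n c • y := by
      intro k
      induction k with
      | zero => intro n c z hz; exact ⟨z, hz, rfl⟩
      | succ k ih =>
        intro n c z hz
        have : ∃ w ∈ Metric.closedBall x (r (n + k)),
            branch γ (n + k + 1) c • z = branch γ (n + k) c • w := by
          rw [branch]
          cases c (n + k)
          · exact ⟨z, Metric.closedBall_subset_closedBall (hrle _) hz, by simp⟩
          · exact ⟨γ (n + k) • z, hball _ _ _ (hrpos _) z hz, by simp [mul_smul]⟩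
        obtain ⟨w, hw, hw'⟩ := this
        obtain ⟨y, hy, hy'⟩ := ih n c w hw
        exact ⟨y, hy, by rw [← add_assoc, hw', hy']⟩
    intro n k c
    exact key k n c x (Metric.mem_closedBall_self (hrpos _).le)
  have hsmall : ∀ n c, ∀ y ∈ Metric.closedBall x (r (n + 1)),
      dist (branch γ (n + 1) c • y) (branch γ (n + 1) c • x) < (1 / 2) ^ n := by
    intro n c y hy
    have := hdist (S n) n (r n) (hrpos n) _ (hmem n c) y hy
    rw [branch]
    cases c n
    · simpa using this.1
    · simpa [mul_smul] using this.2
  have hdn : ∀ n c k, n + 1 ≤ k →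
      dist (branch γ k c • x) (branch γ (n + 1) c • x) < (1 / 2) ^ n := by
    intro n c k hk
    obtain ⟨j, rfl⟩ := Nat.exists_eq_add_of_le hk
    obtain ⟨y, hy, he⟩ := hnest (n + 1) j c
    rw [he]
    exact hsmall n c y hy
  have hhalf : Tendsto (fun n : ℕ => (1 / 2 : ℝ) ^ n) atTop (𝓝 0) :=
    tendsto_pow_atTop_nhds_zero_of_lt_one (by norm_num) (by norm_num)
  have hcau : ∀ c, CauchySeq fun n => branch γ n c • x := by
    intro c
    rw [Metric.cauchySeq_iff']
    intro ε hε
    obtain ⟨n, hn⟩ := (hhalf.eventually (gt_mem_nhds hε)).exists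
    exact ⟨n + 1, fun k hk => (hdn n c k hk).trans hn⟩
  choose φ hφ using fun c => cauchySeq_tendsto_of_complete (hcau c)
  have hφmem : ∀ n c, ∃ y ∈ Metric.closedBall x (r n), φ c = branch γ n c • y := by
    intro n c
    refine ⟨(branch γ n c)⁻¹ • φ c, ?_, by simp⟩
    have ht := ((hcont (branch γ n c)⁻¹).tendsto (φ c)).comp (hφ c)
    refine Metric.isClosed_closedBall.mem_of_tendsto ht ?_
    filter_upwards [eventually_ge_atTop n] with k hk
    obtain ⟨j, rfl⟩ := Nat.exists_eq_add_of_le hk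
    obtain ⟨y, hy, he⟩ := hnest n j c
    simpa [he] using hy
  have hφdist : ∀ n c, dist (φ c) (branch γ (n + 1) c • x) < (1 / 2) ^ n := by
    intro n c
    obtain ⟨y, hy, he⟩ := hφmem (n + 1) c
    rw [he]
    exact hsmall n c y hy
  have hsep1 : ∀ n c d, c n = true → d n = false → (φ c, φ d) ∉ R n := by
    intro n c d hc hd
    obtain ⟨y, hy, he⟩ := hφmem (n + 1) c
    obtain ⟨z, hz, he'⟩ := hφmem (n + 1) d
    rw [he, he', branch, branch, hc, hd]
    simpa [mul_smul] using
      hR (S n) n (r n) (hrpos n) _ (hmem n c) _ (hmem n d) y hy z hz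
  have hsep2 : ∀ n c d, c n ≠ d n → (φ c, φ d) ∉ R n := by
    intro n c d h
    cases hc : c n <;> cases hd : d n
    · exact absurd (hc.trans hd.symm) h
    · exact fun h' => hsep1 n d c hd hc (hsymm _ _ _ h')
    · exact hsep1 n c d hc hd
    · exact absurd (hc.trans hd.symm) h
  refine ⟨φ, ?_, ?_, ?_, ?_, ?_⟩
  · rw [continuous_iff_continuousAt]
    intro c
    rw [ContinuousAt, Metric.tendsto_nhds]
    intro ε hε
    obtain ⟨n, hn⟩ := (hhalf.eventually (gt_mem_nhds (half_pos hε))).exists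
    have hev : ∀ᶠ d in 𝓝 c, ∀ i ∈ Finset.range (n + 1), d i = c i := by
      rw [eventually_all_finset]
      intro i _
      exact (continuous_apply i).continuousAt.eventually
        ((isOpen_discrete {c i}).mem_nhds rfl)
    filter_upwards [hev] with d hd
    have hb := branch_congr γ d c (n + 1) fun i hi => hd i (Finset.mem_range.2 hi)
    have h1 := hφdist n d
    have h2 := hφdist n c
    rw [hb] at h1
    have := dist_triangle_right (φ d) (φ c) (branch γ (n + 1) c • x)
    linarith
  -- Distinct sequences differ at some `n`, and `R n` is reflexive.
  · intro c d h
    by_contra hne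
    obtain ⟨n, hn⟩ := Function.ne_iff.1 hne
    exact hsep2 n c d hn (h ▸ hrefl n _)
  · intro c
    exact mem_closure_of_tendsto (hφ c) (Eventually.of_forall fun n => ⟨_, rfl⟩)
  · rintro c d ⟨N, hN⟩
    refine ⟨branch γ N d * (branch γ N c)⁻¹, ?_⟩
    have ht := ((hcont (branch γ N d * (branch γ N c)⁻¹)).tendsto (φ c)).comp (hφ c)
    refine tendsto_nhds_unique ht ((hφ d).congr' ?_)
    filter_upwards [eventually_ge_atTop N] with k hk
    obtain ⟨j, rfl⟩ := Nat.exists_eq_add_of_le hk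
    simp only [Function.comp, ← mul_smul]
    rw [branch_tail γ c d N hN j]
  · intro c d h n hn
    have : ∃ m ≥ n, c m ≠ d m := by
      by_contra! hcon
      exact h ⟨n, hcon⟩
    obtain ⟨m, hm, hne⟩ := this
    exact hsep2 m c d hne (monotone_nat_of_le_succ hmono hm hn)

/-! ### Minimal invariant filters and almost periodic points -/

/-- Invariance of a filter under the action of `Γ`; such filters stand for the closed invariant
subsets of the space of ultrafilters on `X`. -/
def IsInvariantFilter (Γ : Type*) {X : Type*} [Group Γ] [MulAction Γ X] (F : Filter X) : Prop :=
  ∀ γ : Γ, ∀ A ∈ F, γ • A ∈ F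

/-- The coarsest filter refining `F` that contains the complement of every translate of `A`: the
sets that belong to `F` after adjoining finitely many translates of `A`. It may be trivial. -/
def avoidFilter {X : Type*} (Γ : Type*) [Group Γ] [MulAction Γ X] (F : Filter X) (A : Set X) :
    Filter X where
  sets := {B | ∃ Δ : Finset Γ, B ∪ ⋃ δ ∈ Δ, δ • A ∈ F}
  univ_sets := ⟨∅, by simp⟩
  sets_of_superset := by
    rintro B C ⟨Δ, h⟩ hBC
    exact ⟨Δ, Filter.mem_of_superset h (Set.union_subset_union_left _ hBC)⟩
  inter_sets := by
    classical
    rintro B C ⟨Δ, h⟩ ⟨Δ', h'⟩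
    refine ⟨Δ ∪ Δ', ?_⟩
    filter_upwards [h, h'] with x hx hx'
    simp only [Set.mem_union, Set.mem_iUnion, Finset.mem_union, Set.mem_inter_iff] at hx hx' ⊢
    grind

theorem mem_avoidFilter {X Γ : Type*} [Group Γ] [MulAction Γ X] {F : Filter X} {A B : Set X} :
    B ∈ avoidFilter Γ F A ↔ ∃ Δ : Finset Γ, B ∪ ⋃ δ ∈ Δ, δ • A ∈ F := Iff.rfl

theorem avoidFilter_le {X Γ : Type*} [Group Γ] [MulAction Γ X] (F : Filter X) (A : Set X) :
    avoidFilter Γ F A ≤ F := fun B hB => ⟨∅, by simpa using hB⟩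

theorem compl_mem_avoidFilter {X Γ : Type*} [Group Γ] [MulAction Γ X] (F : Filter X) (A : Set X) :
    Aᶜ ∈ avoidFilter Γ F A := ⟨{1}, by simp⟩

theorem avoidFilter_neBot {X Γ : Type*} [Group Γ] [MulAction Γ X] {F : Filter X} {A : Set X}
    (h : ¬ ∃ Δ : Finset Γ, (⋃ δ ∈ Δ, δ • A) ∈ F) : (avoidFilter Γ F A).NeBot := by
  refine Filter.neBot_iff.2 fun hbot => h ?_
  have : (∅ : Set X) ∈ avoidFilter Γ F A := hbot ▸ Filter.mem_bot
  obtain ⟨Δ, hΔ⟩ := this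
  exact ⟨Δ, by simpa using hΔ⟩

theorem IsInvariantFilter.avoidFilter {X Γ : Type*} [Group Γ] [MulAction Γ X] {F : Filter X}
    (hF : IsInvariantFilter Γ F) (A : Set X) : IsInvariantFilter Γ (avoidFilter Γ F A) := by
  classical
  rintro γ B ⟨Δ, h⟩
  refine ⟨Δ.image (γ * ·), ?_⟩
  have := hF γ _ h
  rw [Set.smul_set_union, Set.smul_set_iUnion₂] at this
  simpa only [Finset.set_biUnion_finset_image, mul_smul] using this

/-- By Zorn's lemma every proper invariant filter is refined by a minimal one, `F`. Minimality
gives the dichotomy: either `A` is negligible for `F`, or finitely many translates of `A` form a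
member of `F`, since otherwise `avoidFilter Γ F A` would be a strictly finer invariant filter. -/
theorem exists_minimal_invariantFilter {X Γ : Type*} [Group Γ] [MulAction Γ X] (F₀ : Filter X)
    [F₀.NeBot] (hF₀ : IsInvariantFilter Γ F₀) :
    ∃ F ≤ F₀, F.NeBot ∧ IsInvariantFilter Γ F ∧
      ∀ A : Set X, Aᶜ ∈ F ∨ ∃ Δ : Finset Γ, (⋃ δ ∈ Δ, δ • A) ∈ F := by
  obtain ⟨F, hle, ⟨hne, hinv⟩, hmin⟩ : ∃ F ≤ F₀, (F.NeBot ∧ IsInvariantFilter Γ F) ∧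
      ∀ ⦃G : Filter X⦄, G.NeBot ∧ IsInvariantFilter Γ G → G ≤ F → F ≤ G := @zorn_le_nonempty₀ (Filter X)ᵒᵈ _
    {F : Filter X | F.NeBot ∧ IsInvariantFilter Γ F}
    (by
      intro c hc hchain y hy
      change Set (Filter X) at c
      have hdir : DirectedOn (· ≥ ·) c :=
        (show IsChain (· ≥ ·) c from hchain).directedOn
      have hbot : (⊥ : Filter X) ∉ c := fun h => (hc h).1.ne rfl
      refine ⟨(sInf c : Filter X), ⟨Filter.sInf_neBot_of_directed' ⟨y, hy⟩ hdir hbot, ?_⟩,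
        fun F hF => sInf_le (α := Filter X) hF⟩
      intro γ A hA
      have hn : c.Nonempty := ⟨y, hy⟩
      rw [sInf_eq_iInf, Filter.mem_biInf_of_directed hdir hn] at hA ⊢
      obtain ⟨F, hF, hAF⟩ := hA
      exact ⟨F, hF, (hc hF).2 γ A hAF⟩) F₀ ⟨inferInstance, hF₀⟩
  refine ⟨F, hle, hne, hinv, fun A => ?_⟩
  by_cases h : ∃ Δ : Finset Γ, (⋃ δ ∈ Δ, δ • A) ∈ F
  · exact Or.inr h
  · have hF : F ≤ avoidFilter Γ F A :=
      hmin ⟨avoidFilter_neBot h, hinv.avoidFilter A⟩ (avoidFilter_le F A)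
    exact Or.inl (hF (compl_mem_avoidFilter F A))

open Set Filter Topology in
/-- A compact positive set contains an almost periodic point: the orbit of `x` is covered by
finitely many translates of any neighbourhood of `x`. -/
theorem exists_syndetic_point {X Γ : Type*} [MetricSpace X]
    [Group Γ] [MulAction Γ X]
    (hcont : ∀ γ : Γ, Continuous fun x : X => γ • x)
    (Y : Set X) (hY : ∀ γ : Γ, γ • Y = Y)
    (𝒰 : Set (Set X))
    (h𝒰 : 𝒰 = {U : Set X | IsOpen U ∧ ¬∃ Δ : Finset Γ, Y ⊆ ⋃ δ ∈ Δ, δ • U})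
    (K : Set X) (hK : IsCompact K) (hKpos : ¬ MemIdealU 𝒰 K) :
    ∃ x ∈ K, ∀ V : Set X, IsOpen V → x ∈ V →
      ∃ Δ : Finset Γ, ∀ γ : Γ, ∃ δ ∈ Δ, γ • x ∈ δ • V := by
  classical
  subst h𝒰
  unfold MemIdealU at hKpos
  push Not at hKpos
  obtain ⟨U, ⟨hUo, hU⟩, hKU⟩ := hKpos
  have hinv₀ : IsInvariantFilter Γ (avoidFilter Γ (𝓟 Y) U) := by
    refine IsInvariantFilter.avoidFilter (fun γ A hA => ?_) U
    rw [mem_principal] at hA ⊢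
    rw [← hY γ]
    exact smul_set_mono hA
  have : (avoidFilter Γ (𝓟 Y) U).NeBot := avoidFilter_neBot (by simpa using hU)
  obtain ⟨F, hle, hne, hinv, hF⟩ := exists_minimal_invariantFilter _ hinv₀
  -- Finitely many translates of any neighbourhood of `K` form a member of `F`.
  have hKF : ∀ V : Set X, IsOpen V → K ⊆ V → ∃ Δ : Finset Γ, (⋃ δ ∈ Δ, δ • V) ∈ F := by
    intro V hVo hKV
    have h := hKU V hVo hKV
    rw [mem_ofPred_eq, not_and, not_forall_not] at h
    obtain ⟨Δ, hΔ⟩ := h (hVo.union hUo)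
    refine ⟨Δ, hle ⟨Δ, ?_⟩⟩
    rw [mem_principal]
    simpa only [smul_set_union, iUnion_union_distrib] using hΔ
  have hnot : ∀ V : Set X, Vᶜ ∈ F → ¬ ∃ Δ : Finset Γ, (⋃ δ ∈ Δ, δ • V) ∈ F := by
    rintro V hV ⟨Δ, hΔ⟩
    have h1 : (⋂ δ ∈ Δ, δ • Vᶜ) ∈ F := (biInter_finset_mem Δ).2 fun δ _ => hinv δ _ hV
    have h2 := inter_mem hΔ h1
    refine hne.ne (empty_mem_iff_bot.1 (mem_of_superset h2 ?_))
    rintro y ⟨hy, hyc⟩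
    simp only [mem_iUnion, mem_iInter, smul_set_compl] at hy hyc
    obtain ⟨δ, hδ, hyδ⟩ := hy
    exact hyc δ hδ hyδ
  -- By compactness, `F` has a cluster point in `K`.
  obtain ⟨x, hxK, hx⟩ : ∃ x ∈ K, ∀ V : Set X, IsOpen V → x ∈ V → Vᶜ ∉ F := by
    by_contra! hcon
    choose! V hVo hxV hVF using hcon
    obtain ⟨t, htK, hKt⟩ := hK.elim_nhds_subcover V fun x hx => (hVo x hx).mem_nhds (hxV x hx)
    refine hnot (⋃ x ∈ t, V x) ?_
      (hKF _ (isOpen_biUnion fun x hx => hVo x (htK x hx)) hKt)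
    rw [compl_iUnion₂]
    exact (biInter_finset_mem t).2 fun x hx => hVF x (htK x hx)
  refine ⟨x, hxK, fun V hVo hxV => ?_⟩
  obtain ⟨W, hW, hWc, hWV⟩ := exists_mem_nhds_isClosed_subset (hVo.mem_nhds hxV)
  obtain ⟨Δ, hΔ⟩ := (hF (interior W)).resolve_left
    (hx _ isOpen_interior (mem_interior_iff_mem_nhds.2 hW))
  have hΔ' : (⋃ δ ∈ Δ, δ • W) ∈ F :=
    mem_of_superset hΔ (iUnion₂_mono fun δ _ => smul_set_mono interior_subset)
  have hcl : IsClosed (⋃ δ ∈ Δ, δ • W) := by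
    refine isClosed_biUnion_finset fun δ _ => ?_
    rw [← preimage_smul_inv]
    exact hWc.preimage (hcont δ⁻¹)
  refine ⟨Δ, fun γ => ?_⟩
  -- As `F` is invariant, `γ • x` is also a cluster point, hence lies in every closed member of `F`.
  have hmem : γ • x ∈ ⋃ δ ∈ Δ, δ • W := by
    by_contra hn
    refine hx (γ⁻¹ • (⋃ δ ∈ Δ, δ • W)ᶜ) ?_ ?_ ?_
    · rw [← preimage_smul]
      exact hcl.isOpen_compl.preimage (hcont γ)
    · rwa [mem_inv_smul_set_iff]
    · rw [← smul_set_compl, compl_compl]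
      exact hinv _ _ hΔ'
  simp only [mem_iUnion] at hmem
  obtain ⟨δ, hδ, h⟩ := hmem
  exact ⟨δ, hδ, smul_set_mono hWV h⟩

/-! ### The embedding -/

/-- the ideal embedding theorem (Theorem `thm:embedding1`). -/
theorem statement3 {X Γ : Type*} [MetricSpace X] [CompleteSpace X]
    [Group Γ] [MulAction Γ X]
    (hcont : ∀ γ : Γ, Continuous fun x : X => γ • x)
    (Y : Set X) (hY : ∀ γ : Γ, γ • Y = Y)
    (𝒰 : Set (Set X))
    (h𝒰 : 𝒰 = {U : Set X | IsOpen U ∧ ¬∃ Δ : Finset Γ, Y ⊆ ⋃ δ ∈ Δ, δ • U})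
    (R : ℕ → Set (X × X))
    (hmono : ∀ n, R n ⊆ R (n + 1))
    (hrefl : ∀ n, ∀ x : X, (x, x) ∈ R n)
    (hsymm : ∀ n, ∀ x y : X, (x, y) ∈ R n → (y, x) ∈ R n)
    (hclosed : ∀ n, IsClosed (R n))
    (K : Set X) (hK : IsCompact K) (hKpos : ¬ MemIdealU 𝒰 K)
    (ha : ∀ n, ∀ x ∈ K, ∃ γ : Γ, (x, γ • x) ∉ relPow (R n) 4)
    (hb : ∀ γ : Γ, ∃ n, ∀ x ∈ ⋃ γ' : Γ, γ' • K, (x, γ • x) ∈ R n) :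
    ∃ x ∈ K, ∃ φ : (ℕ → Bool) → X,
      Continuous φ ∧ Function.Injective φ ∧
      (∀ c, φ c ∈ closure (Set.range fun γ : Γ => γ • x)) ∧
      (∀ c d, E0 c d → ∃ γ : Γ, γ • φ c = φ d) ∧
      (∀ c d, ¬ E0 c d → ∀ n, (φ c, φ d) ∉ R n) := by
  classical
  obtain ⟨x, hxK, hx⟩ := exists_syndetic_point hcont Y hY 𝒰 h𝒰 K hK hKpos
  refine ⟨x, hxK, exists_cantor_of_separation hcont R hmono hrefl hsymm hclosed x ?_⟩
  intro S n V hVo hxV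
  by_contra! hcon
  have hRmono : Monotone R := monotone_nat_of_le_succ hmono
  obtain ⟨Δ, hΔ⟩ := hx V hVo hxV
  choose b hb using hb
  -- A single `m ≥ n` bounds the displacement of all elements of `S` and `Δ` on `Γ • K`.
  let m := max n ((S ∪ Δ).sup b)
  have hm : ∀ δ ∈ S ∪ Δ, ∀ γ : Γ, (γ • x, δ • γ • x) ∈ R m := fun δ hδ γ =>
    hRmono ((Finset.le_sup hδ).trans (le_max_right _ _))
      (hb δ _ (Set.mem_iUnion.2 ⟨γ, Set.smul_mem_smul_set hxK⟩))
  -- If no return of `x` to `V` is separated, then every `γ • x`, being of the form `δ • γ' • x` with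
  -- `γ' • x ∈ V`, is joined to `x` through the points `t • x`, `s • γ' • x`, `γ' • x`.
  obtain ⟨γ, hγ⟩ := ha m x hxK
  obtain ⟨δ, hδ, hγδ⟩ := hΔ γ
  rw [Set.mem_smul_set_iff_inv_smul_mem, ← mul_smul] at hγδ
  obtain ⟨s, hs, t, ht, hst⟩ := hcon (δ⁻¹ * γ) hγδ
  have h1 : (x, t • x) ∈ R m := by simpa using hm t (Finset.mem_union_left _ ht) 1
  have h2 := hsymm m _ _ (hRmono (le_max_left _ _) hst)
  have h3 := hsymm _ _ _ (hm s (Finset.mem_union_left _ hs) (δ⁻¹ * γ))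
  have h4 : ((δ⁻¹ * γ) • x, γ • x) ∈ R m := by
    simpa [mul_smul] using hm δ (Finset.mem_union_right _ hδ) (δ⁻¹ * γ)
  exact hγ ⟨_, ⟨_, ⟨_, ⟨_, rfl, h1⟩, h2⟩, h3⟩, h4⟩
end

section
/- Suppose X is a complete metric space, Γ is a group acting on X such that each γ ∈ Γ acts as a homeomorphism of X, Y ⊆ X is Γ-invariant, 𝒰 is the family of open sets U ⊆ X for which there is no finite set Δ ⊆ Γ with Y ⊆ Δ·U, (R_n)_{n∈ℕ} is an increasing sequence of reflexive symmetric closed subsets of X × X, and K ⊆ X is a compact I_𝒰-positive set such that: (a) for all n ∈ ℕ and all x ∈ K there exists γ ∈ Γ with ¬(x R_n^{(2)} γ·x); (b) for all γ ∈ Γ there exists n ∈ ℕ such that x R_n γ·x for all x ∈ K; and (c) for all γ ∈ Γ, all x, y ∈ Γ·K and all n ∈ ℕ, x R_n y implies (γ·x) R_n (γ·y). Then there exist x ∈ K and a continuous injective map φ : 2^ℕ → X whose range is contained in the closure of the orbit Γ·x, such that for all c, d ∈ 2^ℕ: if c E₀ d then φ(c) and φ(d) are in the same Γ-orbit, and if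 ¬(c E₀ d) then (φ(c), φ(d)) ∉ ⋃_{n∈ℕ} R_n. -/
/-!
Call a set *syndetic* if finitely many translates of it cover `Y`.  Fix an open non-syndetic `U`
witnessing that `K` is positive: `V ∪ U` is syndetic for every open `V ⊇ K`.  By Zorn's lemma and
compactness one may take `K` minimal among the compact sets positive with respect to `U`
(`exists_good`).  Minimality makes `K` positive locally: every `K ∩ closedBall x₀ r` with `x₀ ∈ K`
is positive with respect to some, possibly larger, non-syndetic open set `U'`.

The core is the recurrence lemma `exists_recurrent`: near each `x₀ ∈ K` there are `x ∈ K` and `g`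
with `g • x` also near `x₀` while `(ε • x, g • x) ∉ R n` for all `ε` in a given finite set.  Let `Δ`
witness that `ball x₀ r ∪ U'` is syndetic, and for `x ∈ K` choose `γ` with
`(x, γ • x) ∉ (R m)⁽²⁾`, where `m` is large.  If `δ • γ⁻¹ • x` is near `x₀` for some `δ ∈ Δ`,
then `g = δ * γ⁻¹` works; the passage to `γ⁻¹` is what turns the left translates in the notion of
syndeticity into bounded perturbations for the left-invariant relations `R n`.  If this fails for
all `x` near `x₀`, compactness yields an open `V ⊇ K ∩ closedBall x₀ (r / 2)` such that finitely
many translates of `U'` cover `V ∩ Y`; as `V ∪ U'` is syndetic, so is `U'` itself.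

Iterating the recurrence lemma gives elements `g n` and shrinking balls `B n` centred in `K`
(`exists_scheme`), and `φ c` is the unique point of
`⋂ n, (g 0 ^ c 0 * ⋯ * g (n - 1) ^ c (n - 1)) • B n`.  Sequences that differ at `n` are sent to a
pair outside `R n`, which gives injectivity and, by monotonicity, the non-reduction clause.
-/

open Pointwise

open Set Filter Topology Metric

/-! ### Syndetic and positive sets -/

/-- `A` is syndetic relative to `Y`: finitely many translates of `A` cover `Y`. The finite set
consists of the inverses of the translating elements. -/
def Synd (Γ : Type*) {X : Type*} [Group Γ] [MulAction Γ X] (Y A : Set X) : Prop :=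
  ∃ Δ : Finset Γ, ∀ y ∈ Y, ∃ δ ∈ Δ, δ • y ∈ A

/-- `K` is positive with respect to the fixed open non-syndetic set `U`. -/
def PosWith (Γ : Type*) {X : Type*} [TopologicalSpace X] [Group Γ] [MulAction Γ X]
    (Y U K : Set X) : Prop :=
  IsOpen U ∧ ¬ Synd Γ Y U ∧ ∀ V, IsOpen V → K ⊆ V → Synd Γ Y (V ∪ U)

section

variable {X Γ : Type*}

lemma synd_iff [Group Γ] [MulAction Γ X] (Y A : Set X) :
    Synd Γ Y A ↔ ∃ Δ : Finset Γ, Y ⊆ ⋃ δ ∈ Δ, δ • A := by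
  classical
  constructor
  · rintro ⟨Δ, h⟩
    refine ⟨Δ.image (·⁻¹), fun y hy => ?_⟩
    obtain ⟨δ, hδ, h1⟩ := h y hy
    simp only [mem_iUnion]
    refine ⟨δ⁻¹, Finset.mem_image_of_mem _ hδ, ?_⟩
    rw [mem_smul_set_iff_inv_smul_mem, inv_inv]
    exact h1
  · rintro ⟨Δ, h⟩
    refine ⟨Δ.image (·⁻¹), fun y hy => ?_⟩
    have := h hy
    simp only [mem_iUnion] at this
    obtain ⟨δ, hδ, h1⟩ := this
    rw [mem_smul_set_iff_inv_smul_mem] at h1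
    exact ⟨δ⁻¹, Finset.mem_image_of_mem _ hδ, h1⟩

/-- A positive compact set contains a nonempty compact set which is positive locally at each of
its points; a minimal compact set positive with respect to `U` has this property. -/
lemma exists_good [MetricSpace X] [Group Γ] [MulAction Γ X] {Y U K : Set X} (hK : IsCompact K)
    (hp : PosWith Γ Y U K) :
    ∃ L ⊆ K, IsCompact L ∧ L.Nonempty ∧
      ∀ x₀ ∈ L, ∀ r > 0, ∃ U', PosWith Γ Y U' (L ∩ closedBall x₀ r) := by
  obtain ⟨L, hLK, hL⟩ := zorn_superset_nonempty {L : Set X | IsCompact L ∧ PosWith Γ Y U L} (by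
    intro c hc hchain hne
    have : Nonempty c := hne.to_subtype
    have hdir : Directed (· ⊇ ·) (fun s : c => (s : Set X)) := by
      intro a b
      rcases hchain.total a.2 b.2 with h | h
      · exact ⟨a, subset_rfl, h⟩
      · exact ⟨b, h, subset_rfl⟩
    refine ⟨⋂₀ c, ⟨?_, hp.1, hp.2.1, ?_⟩, fun s hs => sInter_subset_of_mem hs⟩
    · obtain ⟨s, hs⟩ := hne
      exact (hc hs).1.of_isClosed_subset
        (isClosed_sInter fun t ht => (hc ht).1.isClosed) (sInter_subset_of_mem hs)
    · intro V hV hcV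
      rw [sInter_eq_iInter] at hcV
      obtain ⟨s, hs⟩ := exists_subset_nhds_of_isCompact hdir (fun s => (hc s.2).1)
        (fun x hx => hV.mem_nhds (hcV hx))
      exact (hc s.2).2.2.2 V hV hs) K ⟨hK, hp⟩
  obtain ⟨hLc, hLp⟩ := hL.prop
  refine ⟨L, hLK, hLc, ?_, ?_⟩
  · by_contra hne
    rw [not_nonempty_iff_eq_empty] at hne
    have := hLp.2.2 ∅ isOpen_empty (by rw [hne])
    rw [empty_union] at this
    exact hp.2.1 this
  · intro x₀ hx₀ r hr
    -- `L \ ball x₀ r` is a proper compact subset of `L`, so it is not positive with respect to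
    -- `U`; an open set `V` witnessing this is absorbed into `U`.
    have h1 : ¬ PosWith Γ Y U (L \ ball x₀ r) := by
      intro h
      have := hL.le_of_le ⟨hLc.diff isOpen_ball, h⟩ (show L \ ball x₀ r ⊆ L from sdiff_subset)
      exact (this hx₀).2 (mem_ball_self hr)
    have h2 : ∃ V, IsOpen V ∧ L \ ball x₀ r ⊆ V ∧ ¬ Synd Γ Y (V ∪ U) := by
      by_contra! h
      exact h1 ⟨hp.1, hp.2.1, h⟩
    obtain ⟨V, hV, hLV, hns⟩ := h2
    refine ⟨V ∪ U, hV.union hp.1, hns, fun W hW hLW => ?_⟩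
    rw [← union_assoc]
    refine hLp.2.2 _ (hW.union hV) fun x hx => ?_
    by_cases hxb : x ∈ ball x₀ r
    · exact Or.inl (hLW ⟨hx, ball_subset_closedBall hxb⟩)
    · exact Or.inr (hLV ⟨hx, hxb⟩)

/-! ### Recurrence -/

/-- Recurrence: near every `x₀ ∈ K` some `x ∈ K` has a translate `g • x`, also near `x₀`, that is
`R n`-unrelated to `ε • x` for all `ε` in a prescribed finite set. -/
lemma exists_recurrent [MetricSpace X] [Group Γ] [MulAction Γ X]
    (hcont : ∀ γ : Γ, Continuous fun x : X => γ • x)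
    {Y : Set X} (hY : ∀ γ : Γ, ∀ y ∈ Y, γ • y ∈ Y)
    {R : ℕ → Set (X × X)} (hmono : Monotone R)
    (hsymm : ∀ n, ∀ x y : X, (x, y) ∈ R n → (y, x) ∈ R n)
    {K : Set X} (hK : IsCompact K)
    (hgood : ∀ x₀ ∈ K, ∀ r > 0, ∃ U', PosWith Γ Y U' (K ∩ closedBall x₀ r))
    (ha : ∀ n, ∀ x ∈ K, ∃ γ : Γ, (x, γ • x) ∉ relPow (R n) 2)
    (hb : ∀ γ : Γ, ∃ n, ∀ x ∈ K, (x, γ • x) ∈ R n)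
    (hc : ∀ γ α β : Γ, ∀ x ∈ K, ∀ n,
      (α • x, β • x) ∈ R n → (γ • α • x, γ • β • x) ∈ R n)
    (x₀ : X) (hx₀ : x₀ ∈ K) (r : ℝ) (hr : 0 < r) (n : ℕ) (D : Finset Γ) :
    ∃ x ∈ K, ∃ g : Γ, x ∈ closedBall x₀ r ∧ g • x ∈ closedBall x₀ r ∧
      ∀ ε ∈ D, (ε • x, g • x) ∉ R n := by
  classical
  have hrr : (0 : ℝ) < r / 2 := by positivity
  obtain ⟨U', -, hUn, hUp⟩ := hgood x₀ hx₀ (r / 2) hrr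
  obtain ⟨Δ, hΔ⟩ := hUp (ball x₀ r) isOpen_ball
    (inter_subset_right.trans (closedBall_subset_ball (by linarith)))
  choose b hb using hb
  obtain ⟨m, hnm, hm⟩ : ∃ m, n ≤ m ∧ ∀ δ ∈ Δ, ∀ ε ∈ D, ∀ x ∈ K, (x, (δ⁻¹ * ε) • x) ∈ R m := by
    refine ⟨max n ((Δ ×ˢ D).sup fun p => b (p.1⁻¹ * p.2)), le_max_left _ _, ?_⟩
    intro δ hδ ε hε x hx
    refine hmono (le_trans ?_ (le_max_right _ _)) (hb (δ⁻¹ * ε) x hx)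
    exact Finset.le_sup (f := fun p : Γ × Γ => b (p.1⁻¹ * p.2)) (b := (δ, ε)) (by simp [hδ, hε])
  by_contra! hcon
  have ha' : ∀ x : X, ∃ γ : Γ, x ∈ K → (x, γ • x) ∉ relPow (R m) 2 := by
    intro x
    by_cases hx : x ∈ K
    · obtain ⟨γ, h⟩ := ha m x hx
      exact ⟨γ, fun _ => h⟩
    · exact ⟨1, fun h => absurd h hx⟩
  choose γ hγ using ha'
  have key : ∀ x ∈ K ∩ closedBall x₀ (r / 2), ∀ δ ∈ Δ, δ • (γ x)⁻¹ • x ∉ closedBall x₀ r := by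
    rintro x ⟨hx, hxb⟩ δ hδ hmem
    obtain ⟨ε, hε, hR⟩ := hcon x hx (δ * (γ x)⁻¹)
      (closedBall_subset_closedBall (by linarith) hxb) (by rwa [mul_smul])
    have h1 := hc (γ x * δ⁻¹) ε (δ * (γ x)⁻¹) x hx n hR
    have e1 : (γ x * δ⁻¹) • (δ * (γ x)⁻¹) • x = x := by simp [← mul_smul, mul_assoc]
    rw [e1] at h1
    have h2 := hc (γ x) 1 (δ⁻¹ * ε) x hx m (by simpa using hm δ hδ ε hε x hx)
    have e2 : (γ x * δ⁻¹) • ε • x = γ x • (δ⁻¹ * ε) • x := by simp [← mul_smul, mul_assoc]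
    rw [e2] at h1
    rw [one_smul] at h2
    exact hγ x hx ⟨_, ⟨x, rfl, hsymm _ _ _ (hmono hnm h1)⟩, hsymm _ _ _ h2⟩
  let O : X → Set X := fun x => ⋂ δ ∈ Δ, {v | δ • (γ x)⁻¹ • v ∉ closedBall x₀ r}
  have hO : ∀ x, IsOpen (O x) := fun x => by
    refine isOpen_biInter_finset fun δ _ => ?_
    exact isClosed_closedBall.isOpen_compl.preimage ((hcont δ).comp (hcont (γ x)⁻¹))
  obtain ⟨T, hTK, hT⟩ := (hK.inter_right (isClosed_closedBall (x := x₀) (ε := r / 2))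
    ).elim_nhds_subcover O (fun x hx => (hO x).mem_nhds (by simpa [O] using key x hx))
  obtain ⟨Δ', hΔ'⟩ := hUp (⋃ x ∈ T, O x) (isOpen_biUnion fun x _ => hO x) hT
  refine hUn ⟨Δ' ∪ (Δ ×ˢ T ×ˢ Δ').image (fun p => p.1 * (γ p.2.1)⁻¹ * p.2.2), fun y hy => ?_⟩
  obtain ⟨δ', hδ', h | h⟩ := hΔ' y hy
  · simp only [mem_iUnion] at h
    obtain ⟨x, hxT, hx⟩ := h
    obtain ⟨δ, hδ, h⟩ := hΔ ((γ x)⁻¹ • δ' • y) (hY _ _ (hY _ _ hy))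
    have hxδ : δ • (γ x)⁻¹ • δ' • y ∉ closedBall x₀ r := by
      simp only [O, mem_iInter] at hx
      exact hx δ hδ
    refine ⟨δ * (γ x)⁻¹ * δ', Finset.mem_union_right _ (Finset.mem_image.2
      ⟨(δ, x, δ'), by simp [hδ, hxT, hδ'], rfl⟩), ?_⟩
    rw [mul_smul, mul_smul]
    exact h.resolve_left fun h' => hxδ (ball_subset_closedBall h')
  · exact ⟨δ', Finset.mem_union_left _ hδ', h⟩

/-! ### The Cantor scheme -/

/-- The inductive construction. The finite set `D n` contains the `2 ^ n` products
`g 0 ^ c 0 * ⋯ * g (n - 1) ^ c (n - 1)`, and the ball of radius `r n` about `x n` shrinks fast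
enough that its translates by `D n` are small and, one step later, `R n`-separated. -/
lemma exists_scheme [MetricSpace X] [Group Γ] [MulAction Γ X]
    (hcont : ∀ γ : Γ, Continuous fun x : X => γ • x)
    {R : ℕ → Set (X × X)} (hclosed : ∀ n, IsClosed (R n))
    {K : Set X} (hne : K.Nonempty)
    (hc : ∀ γ α β : Γ, ∀ x ∈ K, ∀ n,
      (α • x, β • x) ∈ R n → (γ • α • x, γ • β • x) ∈ R n)
    (hrec : ∀ x₀ ∈ K, ∀ r : ℝ, 0 < r → ∀ (n : ℕ) (D : Finset Γ),
      ∃ x ∈ K, ∃ g : Γ, x ∈ closedBall x₀ r ∧ g • x ∈ closedBall x₀ r ∧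
        ∀ ε ∈ D, (ε • x, g • x) ∉ R n) :
    ∃ (D : ℕ → Finset Γ) (x : ℕ → X) (r : ℕ → ℝ) (g : ℕ → Γ),
      1 ∈ D 0 ∧ ∀ n, x n ∈ K ∧ 0 < r n ∧
        (∀ ε ∈ D n, ε ∈ D (n + 1) ∧ ε * g n ∈ D (n + 1)) ∧
        (∀ z ∈ closedBall (x (n + 1)) (r (n + 1)),
          z ∈ closedBall (x n) (r n) ∧ g n • z ∈ closedBall (x n) (r n)) ∧
        (∀ ε ∈ D (n + 1), ∀ z ∈ closedBall (x (n + 1)) (r (n + 1)),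
          ∀ z' ∈ closedBall (x (n + 1)) (r (n + 1)), dist (ε • z) (ε • z') ≤ (1 / 2) ^ n) ∧
        (∀ ε ∈ D n, ∀ ε' ∈ D n, ∀ z ∈ closedBall (x (n + 1)) (r (n + 1)),
          ∀ z' ∈ closedBall (x (n + 1)) (r (n + 1)),
            (ε • z, (ε' * g n) • z') ∉ R n) := by
  classical
  let S := {s : Finset Γ × X × ℝ // s.2.1 ∈ K ∧ 0 < s.2.2}
  have step : ∀ (n : ℕ) (s : S), ∃ (g : Γ) (t : S),
      (∀ ε ∈ s.1.1, ε ∈ t.1.1 ∧ ε * g ∈ t.1.1) ∧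
      (∀ z ∈ closedBall t.1.2.1 t.1.2.2,
          z ∈ closedBall s.1.2.1 s.1.2.2 ∧ g • z ∈ closedBall s.1.2.1 s.1.2.2) ∧
      (∀ ε ∈ t.1.1, ∀ z ∈ closedBall t.1.2.1 t.1.2.2, ∀ z' ∈ closedBall t.1.2.1 t.1.2.2,
          dist (ε • z) (ε • z') ≤ (1 / 2) ^ n) ∧
      (∀ ε ∈ s.1.1, ∀ ε' ∈ s.1.1, ∀ z ∈ closedBall t.1.2.1 t.1.2.2,
          ∀ z' ∈ closedBall t.1.2.1 t.1.2.2, (ε • z, (ε' * g) • z') ∉ R n) := by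
    rintro n ⟨⟨D, x₀, r⟩, hx₀, hr⟩
    simp only at hx₀ hr
    obtain ⟨x, hx, g, hxb, hgb, hR⟩ := hrec x₀ hx₀ (r / 2) (by positivity) n
      ((D ×ˢ D).image fun p => p.2⁻¹ * p.1)
    have hlt : closedBall x₀ (r / 2) ⊆ ball x₀ r := closedBall_subset_ball (by linarith)
    let D' := D ∪ D.image (· * g)
    have e1 : ∀ᶠ z in 𝓝 x, z ∈ closedBall x₀ r :=
      mem_of_superset (isOpen_ball.mem_nhds (hlt hxb)) ball_subset_closedBall
    have e2 : ∀ᶠ z in 𝓝 x, g • z ∈ closedBall x₀ r :=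
      (hcont g).continuousAt.eventually
        (mem_of_superset (isOpen_ball.mem_nhds (hlt hgb)) ball_subset_closedBall)
    have e3 : ∀ᶠ z in 𝓝 x, ∀ ε ∈ D', dist (ε • z) (ε • x) < (1 / 2) ^ n / 2 :=
      (eventually_all_finset D').2 fun ε _ =>
        (hcont ε).continuousAt.eventually (ball_mem_nhds _ (by positivity))
    have e4 : ∀ᶠ p : X × X in 𝓝 x ×ˢ 𝓝 x, ∀ q ∈ D ×ˢ D, (q.1 • p.1, (q.2 * g) • p.2) ∉ R n := by
      refine (eventually_all_finset _).2 fun q hq => ?_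
      rw [← nhds_prod_eq]
      have hco : Continuous fun p : X × X => (q.1 • p.1, (q.2 * g) • p.2) :=
        ((hcont q.1).comp continuous_fst).prodMk ((hcont (q.2 * g)).comp continuous_snd)
      refine ((hclosed n).isOpen_compl.preimage hco).mem_nhds ?_
      intro hmem
      have := hc q.2⁻¹ q.1 (q.2 * g) x hx n hmem
      refine hR (q.2⁻¹ * q.1) (Finset.mem_image_of_mem (fun p : Γ × Γ => p.2⁻¹ * p.1) hq) ?_
      simpa [← mul_smul] using this
    obtain ⟨W, hW, hW4⟩ := mem_prod_self_iff.1 e4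
    obtain ⟨r', hr', hsub⟩ := nhds_basis_closedBall.mem_iff.1
      (inter_mem (inter_mem e1 e2) (inter_mem e3 hW))
    refine ⟨g, ⟨(D', x, r'), hx, hr'⟩, ?_, ?_, ?_, ?_⟩
    · intro ε hε
      exact ⟨Finset.mem_union_left _ hε,
        Finset.mem_union_right _ (Finset.mem_image_of_mem (· * g) hε)⟩
    · intro z hz
      exact (hsub hz).1
    · intro ε hε z hz z' hz'
      have h1 := (hsub hz).2.1 ε hε
      have h2 := (hsub hz').2.1 ε hε
      have := dist_triangle_right (ε • z) (ε • z') (ε • x)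
      linarith
    · intro ε hε ε' hε' z hz z' hz'
      exact hW4 (mk_mem_prod (hsub hz).2.2 (hsub hz').2.2) (ε, ε') (Finset.mk_mem_product hε hε')
  choose G T h1 h2 h3 h4 using step
  obtain ⟨k, hk⟩ := hne
  let s : ℕ → S := fun n => Nat.rec ⟨({1}, k, 1), hk, one_pos⟩ (fun n t => T n t) n
  exact ⟨fun n => (s n).1.1, fun n => (s n).1.2.1, fun n => (s n).1.2.2, fun n => G n (s n),
    Finset.mem_singleton_self _, fun n => ⟨(s n).2.1, (s n).2.2, h1 n (s n), h2 n (s n),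
      h3 n (s n), h4 n (s n)⟩⟩

/-- The product `g 0 ^ c 0 * ⋯ * g (n - 1) ^ c (n - 1)`, reading `c i` as `0` or `1`. -/
def wordProd [Group Γ] (g : ℕ → Γ) (c : ℕ → Bool) : ℕ → Γ
  | 0 => 1
  | n + 1 => wordProd g c n * if c n then g n else 1

lemma wordProd_congr [Group Γ] (g : ℕ → Γ) {c d : ℕ → Bool} (n : ℕ) (h : ∀ i < n, c i = d i) :
    wordProd g c n = wordProd g d n := by
  induction n with
  | zero => rfl
  | succ n ih => simp only [wordProd, ih fun i hi => h i (by omega), h n (by omega)]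

lemma wordProd_zero [Group Γ] (g : ℕ → Γ) (n : ℕ) : wordProd g (fun _ => false) n = 1 := by
  induction n with
  | zero => rfl
  | succ n ih => simp [wordProd, ih]

lemma wordProd_tail [Group Γ] (g : ℕ → Γ) {c d : ℕ → Bool} {N : ℕ} (h : ∀ n ≥ N, c n = d n)
    (n : ℕ) (hn : N ≤ n) :
    wordProd g d N * (wordProd g c N)⁻¹ * wordProd g c n = wordProd g d n := by
  induction n, hn using Nat.le_induction with
  | base => simp
  | succ n hn ih => simp only [wordProd, ← ih, h n hn, mul_assoc]

end

/-! ### The embedding -/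

/-- the variant ideal embedding theorem (Theorem `thm:embedding2`). -/
theorem statement4 {X Γ : Type*} [MetricSpace X] [CompleteSpace X]
    [Group Γ] [MulAction Γ X]
    (hcont : ∀ γ : Γ, Continuous fun x : X => γ • x)
    (Y : Set X) (hY : ∀ γ : Γ, γ • Y = Y)
    (𝒰 : Set (Set X))
    (h𝒰 : 𝒰 = {U : Set X | IsOpen U ∧ ¬∃ Δ : Finset Γ, Y ⊆ ⋃ δ ∈ Δ, δ • U})
    (R : ℕ → Set (X × X))
    (hmono : ∀ n, R n ⊆ R (n + 1))
    (hrefl : ∀ n, ∀ x : X, (x, x) ∈ R n)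
    (hsymm : ∀ n, ∀ x y : X, (x, y) ∈ R n → (y, x) ∈ R n)
    (hclosed : ∀ n, IsClosed (R n))
    (K : Set X) (hK : IsCompact K) (hKpos : ¬ MemIdealU 𝒰 K)
    (ha : ∀ n, ∀ x ∈ K, ∃ γ : Γ, (x, γ • x) ∉ relPow (R n) 2)
    (hb : ∀ γ : Γ, ∃ n, ∀ x ∈ K, (x, γ • x) ∈ R n)
    (hc : ∀ γ : Γ, ∀ x ∈ ⋃ γ' : Γ, γ' • K, ∀ y ∈ ⋃ γ' : Γ, γ' • K, ∀ n,
      (x, y) ∈ R n → (γ • x, γ • y) ∈ R n) :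
    ∃ x ∈ K, ∃ φ : (ℕ → Bool) → X,
      Continuous φ ∧ Function.Injective φ ∧
      (∀ c, φ c ∈ closure (Set.range fun γ : Γ => γ • x)) ∧
      (∀ c d, E0 c d → ∃ γ : Γ, γ • φ c = φ d) ∧
      (∀ c d, ¬ E0 c d → ∀ n, (φ c, φ d) ∉ R n) := by
  classical
  have hmono' : Monotone R := monotone_nat_of_le_succ hmono
  have hY' : ∀ γ : Γ, ∀ y ∈ Y, γ • y ∈ Y := fun γ y hy => by
    have := smul_mem_smul_set (a := γ) hy
    rwa [hY] at this
  obtain ⟨U, hU⟩ : ∃ U, PosWith Γ Y U K := by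
    unfold MemIdealU at hKpos
    push Not at hKpos
    obtain ⟨U, hU, h⟩ := hKpos
    rw [h𝒰] at hU h
    refine ⟨U, hU.1, by rw [synd_iff]; exact hU.2, fun V hV hKV => ?_⟩
    rw [synd_iff]
    by_contra hn
    exact h V hV hKV ⟨hV.union hU.1, hn⟩
  obtain ⟨L, hLK, hL, hLne, hgood⟩ := exists_good hK hU
  have hc' : ∀ γ α β : Γ, ∀ x ∈ L, ∀ n,
      (α • x, β • x) ∈ R n → (γ • α • x, γ • β • x) ∈ R n := fun γ α β x hx n h =>
    hc γ _ (mem_iUnion.2 ⟨α, smul_mem_smul_set (hLK hx)⟩) _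
      (mem_iUnion.2 ⟨β, smul_mem_smul_set (hLK hx)⟩) n h
  obtain ⟨D, x, r, g, hD0, hs⟩ := exists_scheme hcont hclosed hLne hc'
    (exists_recurrent hcont hY' hmono' hsymm hL hgood (fun n x hx => ha n x (hLK hx))
      (fun γ => (hb γ).imp fun n h x hx => h x (hLK hx)) hc')
  choose hxK hr hD hnest hdiam hsep using hs
  have hwD : ∀ c n, wordProd g c n ∈ D n := by
    intro c n
    induction n with
    | zero => exact hD0
    | succ n ih =>
      rw [wordProd]
      split_ifs
      · exact (hD n _ ih).2
      · rw [mul_one]; exact (hD n _ ih).1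
  -- `S c n` is the translate `wordProd g c n • closedBall (x n) (r n)`.
  let S : (ℕ → Bool) → ℕ → Set X := fun c n =>
    {z | (wordProd g c n)⁻¹ • z ∈ closedBall (x n) (r n)}
  have hSanti : ∀ c, Antitone (S c) := by
    refine fun c => antitone_nat_of_succ_le fun n z hz => ?_
    have h := hnest n _ hz
    have e : (wordProd g c n)⁻¹ • z =
        (if c n then g n else 1) • (wordProd g c (n + 1))⁻¹ • z := by
      rw [← mul_smul, wordProd, mul_inv_rev, mul_inv_cancel_left]
    change (wordProd g c n)⁻¹ • z ∈ closedBall (x n) (r n)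
    rw [e]
    split_ifs
    · exact h.2
    · rw [one_smul]; exact h.1
  have hSclosed : ∀ c n, IsClosed (S c n) := fun c n =>
    isClosed_closedBall.preimage (hcont _)
  have hSdiam : ∀ c n, ∀ z ∈ S c (n + 1), ∀ z' ∈ S c (n + 1), dist z z' ≤ (1 / 2) ^ n := by
    intro c n z hz z' hz'
    simpa using hdiam n _ (hwD c (n + 1)) _ hz _ hz'
  have hpow : ∀ ε > (0 : ℝ), ∃ n : ℕ, (1 / 2 : ℝ) ^ n < ε := fun ε hε =>
    exists_pow_lt_of_lt_one hε (by norm_num)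
  have hSuniq : ∀ c z z' N, (∀ n ≥ N, z ∈ S c n) → (∀ n ≥ N, z' ∈ S c n) → z = z' := by
    intro c z z' N hz hz'
    refine eq_of_forall_dist_le fun ε hε => ?_
    obtain ⟨n, hn⟩ := hpow ε hε
    -- the bound at `n + N` is at most the bound at `n`
    refine (hSdiam c (n + N) z (hz _ (by omega)) z' (hz' _ (by omega))).trans (le_trans ?_ hn.le)
    exact pow_le_pow_of_le_one (by norm_num) (by norm_num) (by omega)
  let p : (ℕ → Bool) → ℕ → X := fun c n => wordProd g c n • x n
  have hpS : ∀ c n, p c n ∈ S c n := fun c n => by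
    simp only [S, p, mem_ofPred_eq, inv_smul_smul]
    exact mem_closedBall_self (hr n).le
  have hlim : ∀ c, ∃ z, Tendsto (p c) atTop (𝓝 z) := by
    refine fun c => cauchySeq_tendsto_of_complete (Metric.cauchySeq_iff'.2 fun ε hε => ?_)
    obtain ⟨n, hn⟩ := hpow ε hε
    exact ⟨n + 1, fun m hm =>
      (hSdiam c n _ (hSanti c hm (hpS c m)) _ (hpS c (n + 1))).trans_lt hn⟩
  choose φ hφ using hlim
  have hφS : ∀ c n, φ c ∈ S c n := fun c n =>
    (hSclosed c n).mem_of_tendsto (hφ c)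
      (eventually_atTop.2 ⟨n, fun m hm => hSanti c hm (hpS c m)⟩)
  have hsep' : ∀ c d n, c n = false → d n = true → (φ c, φ d) ∉ R n := by
    intro c d n hcn hdn
    have h := hsep n _ (hwD c n) _ (hwD d n) _ (hφS c (n + 1)) _ (hφS d (n + 1))
    simpa only [wordProd, hcn, hdn, if_true, Bool.false_eq_true, if_false, mul_one,
      smul_inv_smul] using h
  have hsep2 : ∀ c d n, c n ≠ d n → (φ c, φ d) ∉ R n := by
    intro c d n hne
    cases hcn : c n <;> cases hdn : d n
    · exact absurd (hcn.trans hdn.symm) hne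
    · exact hsep' c d n hcn hdn
    · exact fun h => hsep' d c n hdn hcn (hsymm _ _ _ h)
    · exact absurd (hcn.trans hdn.symm) hne
  -- The base point is the value at the zero sequence, that is, the limit of the centres `x n`.
  have hφ0 : φ (fun _ => false) ∈ K := by
    refine hK.isClosed.mem_of_tendsto (hφ _) (Eventually.of_forall fun n => ?_)
    simp only [p, wordProd_zero, one_smul]
    exact hLK (hxK n)
  refine ⟨φ fun _ => false, hφ0, φ, ?_, ?_, ?_, ?_, ?_⟩
  · refine continuous_iff_continuousAt.2 fun c => Metric.tendsto_nhds.2 fun ε hε => ?_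
    obtain ⟨n, hn⟩ := hpow ε hε
    have hev : ∀ᶠ d in 𝓝 c, ∀ i ∈ Finset.range (n + 1), d i = c i :=
      (eventually_all_finset _).2 fun i _ =>
        ((continuous_apply i).continuousAt.eventually
          (mem_nhds_discrete.2 (rfl : c i = c i))).mono fun _ h => h.symm
    filter_upwards [hev] with d hd
    have hw : wordProd g d (n + 1) = wordProd g c (n + 1) :=
      wordProd_congr g _ fun i hi => hd i (Finset.mem_range.2 hi)
    have hmem : φ d ∈ S c (n + 1) := by
      have := hφS d (n + 1)
      simp only [S, hw] at this
      exact this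
    exact (hSdiam c n _ hmem _ (hφS c (n + 1))).trans_lt hn
  · intro c d h
    by_contra hne
    obtain ⟨n, hn⟩ := Function.ne_iff.1 hne
    exact hsep2 c d n hn (h ▸ hrefl n (φ c))
  · intro c
    refine Metric.mem_closure_iff.2 fun ε hε => ?_
    obtain ⟨n, hn⟩ := hpow ε hε
    refine ⟨_, ⟨wordProd g c (n + 1), rfl⟩,
      (hSdiam c n _ (hφS c (n + 1)) _ ?_).trans_lt hn⟩
    have := hφS (fun _ => false) (n + 1)
    simp only [S, wordProd_zero, inv_one, one_smul, mem_ofPred_eq] at this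
    simpa only [S, mem_ofPred_eq, inv_smul_smul] using this
  · rintro c d ⟨N, hN⟩
    refine ⟨wordProd g d N * (wordProd g c N)⁻¹,
      hSuniq d _ _ N (fun n hn => ?_) (fun n _ => hφS d n)⟩
    have := hφS c n
    simp only [S, mem_ofPred_eq] at this ⊢
    rw [← wordProd_tail g hN n hn, ← mul_smul]
    convert this using 2
    group
  · intro c d hE n hmem
    simp only [E0, not_exists, not_forall] at hE
    obtain ⟨m, hm, hne⟩ := hE n
    exact hsep2 c d m hne (hmono' hm hmem)
end

section
/- Let X be a topological space and let E be an equivalence relation on X each of whose equivalence classes is a G_δ subset of X. Then there is no continuous map f : 2^ℕ → X such that for all c, d ∈ 2^ℕ, c E₀ d if and only if f(c) E f(d). In particular, E₀ does not continuously injectively reduce to E. -/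
theorem dense_E0_class (c : ℕ → Bool) : Dense {d | E0 c d} := by
  intro x
  -- The sequences agreeing with `x` below `n` and with `c` from `n` on lie in the class of `c`.
  have h : Filter.Tendsto (fun n k : ℕ => if k < n then x k else c k) Filter.atTop (nhds x) := by
    rw [tendsto_pi_nhds]
    intro k
    refine tendsto_const_nhds.congr' ?_
    filter_upwards [Filter.eventually_gt_atTop k] with n hn
    simp [hn]
  refine mem_closure_of_tendsto h (Filter.Eventually.of_forall fun n => ⟨n, fun k hk => ?_⟩)
  simp [Nat.not_lt.mpr hk]

/-- if `E` is an equivalence relation on a topological space `X` all of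
whose classes are `G_δ`, then there is no continuous reduction of `E₀` to `E`. In
particular `E₀` does not continuously injectively reduce to `E`. -/
theorem statement11 {X : Type*} [TopologicalSpace X] (E : X → X → Prop)
    (hE : Equivalence E) (hGδ : ∀ x : X, IsGδ {y | E x y}) :
    ¬ ∃ f : (ℕ → Bool) → X, Continuous f ∧ ∀ c d, (E0 c d ↔ E (f c) (f d)) := by
  rintro ⟨f, hf, hred⟩
  have hG (c : ℕ → Bool) : IsGδ {d | E0 c d} := by
    have h : {d | E0 c d} = f ⁻¹' {y | E (f c) y} := Set.ext fun d => hred c d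
    rw [h]
    exact (hGδ (f c)).preimage hf
  obtain ⟨d, ⟨N, hN⟩, ⟨M, hM⟩⟩ := ((dense_E0_class fun _ => false).inter_of_Gδ
    (hG _) (hG _) (dense_E0_class fun _ => true)).nonempty
  have h₁ := hN (max N M) (le_max_left _ _)
  have h₂ := hM (max N M) (le_max_right _ _)
  exact Bool.false_ne_true (h₁.trans h₂.symm)
end

section
/- Let X be a Polish space and let E be a Borel equivalence relation on X (i.e., E is a Borel subset of X × X) such that every equivalence class of E is a G_δ subset of X. Then E is smooth. -/
/-!
If two classes `[x]`, `[y]` have the same closure, both are dense `G_δ` subsets of that closure, so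
they intersect by Baire's theorem and `E x y` holds. Hence, for a countable basis `U n`, the
saturations `[U n]` separate inequivalent points. These saturations are only analytic, and the task
is to replace them by invariant Borel sets.

Call a set of pairs small if countably many invariant Borel sets separate the two coordinates of
each of its elements (`SmallPairs`). Small sets form a `σ`-ideal, and `E` is smooth as soon as `Eᶜ`
is small. Suppose it is not. Given an analytic non-small `S` and an invariant analytic set `A`, some
analytic non-small subset of `S` consists of pairs `p` with `p.1 ∈ A ↔ p.2 ∈ A`
(`SmallPairs.exists_deciding`). Indeed `S ∩ (A ×ˢ A)` is such a set unless it is small. In the latter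
case it can be removed from `S`; the set of remaining pairs with first coordinate in `A` has its
second projection disjoint from `A`, and an invariant Borel set separates `A` from that projection
(`exists_invariant_separation`), so this set is small, and so is its mirror image. Removing both
leaves pairs with no coordinate in `A`.

A fusion argument (`exists_fusion`), in which the analytic sets are parametrized by the Baire space
and longer and longer initial segments of the branches are fixed, now yields one pair
`(x, y) ∈ Eᶜ` with `x ∈ [U n] ↔ y ∈ [U n]` for every `n`. Then `[x]` and `[y]` have the same closure,
a contradiction. This is a form of Gandy–Harrington forcing without effective notions.
-/

open Set Filter Topology MeasureTheory

/-! ### Baire category -/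

/-- Both sets are comeager in their common closure, so they intersect by Baire's theorem. -/
theorem exists_mem_inter_of_isGδ {X : Type*} [TopologicalSpace X] [PolishSpace X]
    {P Q : Set X} (hP : IsGδ P) (hQ : IsGδ Q) (hne : P.Nonempty)
    (h : closure P = closure Q) : (P ∩ Q).Nonempty := by
  have : PolishSpace (closure P) := isClosed_closure.polishSpace
  have hdP : Dense ((↑) ⁻¹' P : Set (closure P)) := by
    rw [Subtype.dense_iff]
    intro x hx
    rwa [Subtype.image_preimage_coe, inter_eq_self_of_subset_right subset_closure]
  have hdQ : Dense ((↑) ⁻¹' Q : Set (closure P)) := by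
    rw [Subtype.dense_iff]
    intro x hx
    rw [Subtype.image_preimage_coe, inter_eq_self_of_subset_right (h ▸ subset_closure)]
    exact h ▸ hx
  have hd := hdP.inter_of_Gδ (hP.preimage continuous_subtype_val)
    (hQ.preimage continuous_subtype_val) hdQ
  have : Nonempty (closure P) := hne.closure.to_subtype
  obtain ⟨x, hx⟩ := hd.nonempty
  exact ⟨x, hx⟩

/-! ### Saturations and invariant separation -/

theorem analyticSet_inter {X : Type*} [TopologicalSpace X] [T2Space X] {A B : Set X}
    (hA : AnalyticSet A) (hB : AnalyticSet B) : AnalyticSet (A ∩ B) := by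
  rw [inter_eq_iInter]
  exact AnalyticSet.iInter (by rintro (_ | _) <;> assumption)

/-- The saturation of an analytic set is analytic. -/
theorem analytic_saturation {X : Type*} [TopologicalSpace X] [PolishSpace X]
    [MeasurableSpace X] [BorelSpace X] {E : X → X → Prop}
    (hBorel : MeasurableSet {p : X × X | E p.1 p.2}) {A : Set X} (hA : AnalyticSet A) :
    AnalyticSet {x | ∃ a ∈ A, E x a} := by
  have h1 : AnalyticSet ({p : X × X | E p.1 p.2} ∩ Prod.snd ⁻¹' A) :=
    analyticSet_inter hBorel.analyticSet (hA.preimage continuous_snd)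
  convert h1.image_of_continuous continuous_fst using 1
  ext x
  simp [and_comm]

/-- Disjoint analytic sets, the first of them invariant, are separated by an invariant Borel set:
alternate between saturating and separating, and take the union. -/
theorem exists_invariant_separation {X : Type*} [TopologicalSpace X] [PolishSpace X]
    [MeasurableSpace X] [BorelSpace X] {E : X → X → Prop} (hE : Equivalence E)
    (hBorel : MeasurableSet {p : X × X | E p.1 p.2}) {A C : Set X}
    (hA : AnalyticSet A) (hAinv : ∀ x y, E x y → y ∈ A → x ∈ A) (hC : AnalyticSet C)
    (hAC : Disjoint A C) :
    ∃ B : Set X, MeasurableSet B ∧ (∀ x y, E x y → (x ∈ B ↔ y ∈ B)) ∧ A ⊆ B ∧ Disjoint B C := by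
  set C' : Set X := {x | ∃ a ∈ C, E x a} with hC'
  have hC'a : AnalyticSet C' := analytic_saturation hBorel hC
  have hstep : ∀ D : {D : Set X // AnalyticSet D ∧ (∀ x y, E x y → y ∈ D → x ∈ D) ∧ Disjoint D C'},
      ∃ B : Set X, MeasurableSet B ∧ D.1 ⊆ B ∧ Disjoint B C' := by
    rintro ⟨D, hD, -, hDC⟩
    obtain ⟨B, h1, h2, h3⟩ := hD.measurablySeparable hC'a hDC
    exact ⟨B, h3, h1, h2.symm⟩
  choose F hFm hFs hFd using hstep
  -- the saturation of a separating set is again a legitimate input of the separation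
  let next : {D : Set X // AnalyticSet D ∧ (∀ x y, E x y → y ∈ D → x ∈ D) ∧ Disjoint D C'} →
      {D : Set X // AnalyticSet D ∧ (∀ x y, E x y → y ∈ D → x ∈ D) ∧ Disjoint D C'} := fun D =>
    ⟨{x | ∃ a ∈ F D, E x a}, analytic_saturation hBorel (hFm D).analyticSet,
      fun x y hxy ⟨a, ha, hya⟩ => ⟨a, ha, hE.trans hxy hya⟩, by
        rw [Set.disjoint_left]
        rintro x ⟨a, ha, hxa⟩ ⟨c, hc, hxc⟩
        exact Set.disjoint_left.1 (hFd D) ha ⟨c, hc, hE.trans (hE.symm hxa) hxc⟩⟩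
  have hA0 : Disjoint A C' := by
    rw [Set.disjoint_left]
    rintro x hx ⟨c, hc, hxc⟩
    exact Set.disjoint_left.1 hAC (hAinv _ _ (hE.symm hxc) hx) hc
  let G : ℕ → {D : Set X // AnalyticSet D ∧ (∀ x y, E x y → y ∈ D → x ∈ D) ∧ Disjoint D C'} :=
    fun n => next^[n] ⟨A, hA, hAinv, hA0⟩
  have hG : ∀ n, G (n + 1) = next (G n) := fun n => Function.iterate_succ_apply' _ _ _
  have hinv : ∀ x y, E x y → y ∈ (⋃ n, F (G n)) → x ∈ ⋃ n, F (G n) := by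
    intro x y hxy hy
    obtain ⟨n, hn⟩ := mem_iUnion.1 hy
    refine mem_iUnion.2 ⟨n + 1, hFs _ ?_⟩
    rw [hG]
    exact ⟨y, hn, hxy⟩
  refine ⟨⋃ n, F (G n), MeasurableSet.iUnion fun n => hFm _,
    fun x y hxy => ⟨hinv _ _ (hE.symm hxy), hinv _ _ hxy⟩,
    (hFs (G 0)).trans (subset_iUnion (fun n => F (G n)) 0), ?_⟩
  rw [Set.disjoint_iUnion_left]
  exact fun n => (hFd (G n)).mono_right
    (show C ⊆ C' from fun c hc => ⟨c, hc, hE.refl c⟩)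

/-! ### Fusion -/

/-- One stage of the fusion: the continuous functions `g k`, `k < n`, are fixed, and every point of
the positive analytic set `T` is the value of each of them at some point agreeing with `a k` on the
first `n` coordinates. -/
structure FusionState {Z : Type*} [TopologicalSpace Z] (small : Set Z → Prop) (n : ℕ) where
  /-- the parametrizations; only those of index `< n` matter -/
  g : ℕ → (ℕ → ℕ) → Z
  /-- the branches; only the entries with both indices `< n` matter -/
  a : ℕ → ℕ → ℕ
  /-- the current condition -/
  T : Set Z
  cont : ∀ k < n, Continuous (g k)
  analytic : AnalyticSet T
  pos : ¬ small T
  sub : ∀ t ∈ T, ∀ k < n, ∃ β : ℕ → ℕ, g k β = t ∧ ∀ i < n, β i = a k i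

/-- Fusion for analytic sets positive with respect to a `σ`-ideal: if each of countably many
requirements can be met by shrinking any positive analytic set, then some point of the given
positive analytic set lies, for every requirement, in a set meeting it. -/
theorem exists_fusion {Z : Type*} [TopologicalSpace Z] [T2Space Z] {small : Set Z → Prop}
    (hempty : small ∅)
    (hunion : ∀ {ι : Type} [Countable ι] (S : ι → Set Z) (T : Set Z), (∀ i, small (S i)) →
      T ⊆ (⋃ i, S i) → small T)
    (D : ℕ → Set Z → Prop)
    (hD : ∀ n S, AnalyticSet S → ¬ small S → ∃ S' ⊆ S, AnalyticSet S' ∧ ¬ small S' ∧ D n S')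
    {S₀ : Set Z} (hS₀ : AnalyticSet S₀) (hpos : ¬ small S₀) :
    ∃ z ∈ S₀, ∀ n, ∃ S, z ∈ S ∧ D n S := by
  have step : ∀ n (σ : FusionState small n), ∃ τ : FusionState small (n + 1),
      τ.T ⊆ σ.T ∧ (∀ k < n, τ.g k = σ.g k) ∧ (∀ k < n, ∀ i < n, τ.a k i = σ.a k i) ∧
      D n (range (τ.g n)) ∧ range (τ.g n) ⊆ σ.T := by
    intro n σ
    obtain ⟨S, hSσ, hSa, hSp, hSD⟩ := hD n σ.T σ.analytic σ.pos
    have hSa' := hSa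
    rw [AnalyticSet] at hSa'
    obtain rfl | ⟨h, hh, rfl⟩ := hSa'
    · exact absurd hempty hSp
    set g : ℕ → (ℕ → ℕ) → Z := Function.update σ.g n h with hg
    have hgn : g n = h := by simp [hg]
    have hgk : ∀ k < n, g k = σ.g k := fun k hk => by simp [hg, hk.ne]
    have hgc : ∀ k < n + 1, Continuous (g k) := by
      intro k hk
      rcases Nat.lt_succ_iff_lt_or_eq.1 hk with hk | rfl
      · rw [hgk k hk]; exact σ.cont k hk
      · rwa [hgn]
    let ext : (Fin (n + 1) → Fin (n + 1) → ℕ) → ℕ → ℕ → ℕ := fun c k i =>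
      if hk : k < n + 1 then if hi : i < n + 1 then c ⟨k, hk⟩ ⟨i, hi⟩ else 0 else 0
    let cyl : (Fin (n + 1) → Fin (n + 1) → ℕ) → Fin (n + 1) → Set (ℕ → ℕ) := fun c k =>
      {β | (∀ i : Fin (n + 1), β i = c k i) ∧ (k.1 < n → ∀ i < n, β i = σ.a k i)}
    have hcyl : ∀ c k, IsClosed (cyl c k) := by
      intro c k
      have : cyl c k = (⋂ i : Fin (n + 1), {β : ℕ → ℕ | β i = c k i}) ∩
          ⋂ (_ : k.1 < n) (i : ℕ) (_ : i < n), {β : ℕ → ℕ | β i = σ.a k i} := by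
        ext β; simp [cyl]
      rw [this]
      exact (isClosed_iInter fun i => isClosed_eq (continuous_apply _) continuous_const).inter
        (isClosed_iInter fun _ => isClosed_iInter fun i => isClosed_iInter fun _ =>
          isClosed_eq (continuous_apply _) continuous_const)
    let piece : (Fin (n + 1) → Fin (n + 1) → ℕ) → Set Z := fun c =>
      range h ∩ ⋂ k : Fin (n + 1), g k '' cyl c k
    have hcover : range h ⊆ ⋃ c, piece c := by
      intro t ht
      have : ∀ k : Fin (n + 1), ∃ β : ℕ → ℕ, g k β = t ∧ (k.1 < n → ∀ i < n, β i = σ.a k i) := by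
        intro k
        by_cases hk : k.1 < n
        · obtain ⟨β, h1, h2⟩ := σ.sub t (hSσ ht) k hk
          exact ⟨β, by rw [hgk k hk, h1], fun _ => h2⟩
        · have hkn : k.1 = n := by omega
          obtain ⟨β, hβ⟩ := ht
          exact ⟨β, by rw [hkn, hgn, hβ], fun h => absurd h hk⟩
      choose β hβ1 hβ2 using this
      refine mem_iUnion.2 ⟨fun k i => β k i, ht, mem_iInter.2 fun k => ?_⟩
      exact ⟨β k, ⟨fun i => rfl, hβ2 k⟩, hβ1 k⟩
    obtain ⟨c, hc⟩ : ∃ c, ¬ small (piece c) := by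
      by_contra! hall
      exact hSp (hunion piece _ hall hcover)
    have hpne : (piece c).Nonempty := by
      by_contra hne
      rw [not_nonempty_iff_eq_empty.1 hne] at hc
      exact hc hempty
    have hext : ∀ (k i : Fin (n + 1)), ext c k i = c k i := fun k i => by
      simp only [ext, k.2, i.2, dif_pos]
    refine ⟨⟨g, ext c, piece c, hgc, ?_, hc, ?_⟩, inter_subset_left.trans hSσ, hgk, ?_, ?_, ?_⟩
    · refine analyticSet_inter hSa (AnalyticSet.iInter fun k => ?_)
      exact (hcyl c k).analyticSet.image_of_continuous (hgc k k.2)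
    · intro t ht k hk
      obtain ⟨β, hβ, hβt⟩ := mem_iInter.1 ht.2 ⟨k, hk⟩
      exact ⟨β, hβt, fun i hi => by rw [hβ.1 ⟨i, hi⟩]; exact (hext ⟨k, hk⟩ ⟨i, hi⟩).symm⟩
    · intro k hk i hi
      obtain ⟨t, ht⟩ := hpne
      have hk' : k < n + 1 := by omega
      have hi' : i < n + 1 := by omega
      obtain ⟨β, hβ, hβt⟩ := mem_iInter.1 ht.2 ⟨k, hk'⟩
      exact (hext ⟨k, hk'⟩ ⟨i, hi'⟩).trans ((hβ.1 ⟨i, hi'⟩).symm.trans (hβ.2 hk i hi))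
    · simpa [hgn] using hSD
    · simpa [hgn] using hSσ
  choose next hT hg ha hDn hsub using step
  have hne0 : S₀.Nonempty := by
    by_contra hne
    exact hpos (not_nonempty_iff_eq_empty.1 hne ▸ hempty)
  let σ : ∀ n, FusionState small n := fun n => Nat.rec
    ⟨fun _ _ => hne0.some, fun _ _ => 0, S₀, by simp, hS₀, hpos, by simp⟩ (fun n s => next n s) n
  have hσ : ∀ n, σ (n + 1) = next n (σ n) := fun n => rfl
  have hgs : ∀ k n, k < n → (σ n).g k = (σ (k + 1)).g k := by
    intro k n hk
    induction n, hk using Nat.le_induction with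
    | base => rfl
    | succ m hm ih => rw [hσ m, hg m _ k hm, ih]
  have has : ∀ k i m n, k < m → i < m → m ≤ n → (σ n).a k i = (σ m).a k i := by
    intro k i m n hk hi hmn
    induction n, hmn using Nat.le_induction with
    | base => rfl
    | succ p hp ih => rw [hσ p, ha p _ k (by omega) i (by omega), ih]
  have hTne : ∀ n, (σ n).T.Nonempty := by
    intro n
    by_contra hne
    exact (σ n).pos (not_nonempty_iff_eq_empty.1 hne ▸ hempty)
  choose t ht using hTne
  let G : ℕ → (ℕ → ℕ) → Z := fun k => (σ (k + 1)).g k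
  let α : ℕ → ℕ → ℕ := fun k i => (σ (k + i + 1)).a k i
  -- the points `t n` converge to the value of each parametrization at its limit branch
  have hlim : ∀ k, Tendsto t atTop (𝓝 (G k (α k))) := by
    intro k
    have hex : ∀ n, ∃ β : ℕ → ℕ, k < n → G k β = t n ∧ ∀ i < n, β i = (σ n).a k i := by
      intro n
      by_cases hk : k < n
      · obtain ⟨β, h1, h2⟩ := (σ n).sub _ (ht n) k hk
        exact ⟨β, fun _ => ⟨by rw [← h1, hgs k n hk], h2⟩⟩
      · exact ⟨0, fun h => absurd h hk⟩
    choose β hβ using hex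
    have hβlim : Tendsto β atTop (𝓝 (α k)) := by
      rw [tendsto_pi_nhds]
      intro i
      refine tendsto_const_nhds.congr' ?_
      filter_upwards [eventually_ge_atTop (k + i + 1)] with n hn
      rw [(hβ n (by omega)).2 i (by omega)]
      exact (has k i (k + i + 1) n (by omega) (by omega) hn).symm
    have hc : Continuous (G k) := (σ (k + 1)).cont k (Nat.lt_succ_self k)
    refine ((hc.tendsto _).comp hβlim).congr' ?_
    filter_upwards [eventually_gt_atTop k] with n hn
    exact (hβ n hn).1
  have heq : ∀ k, G k (α k) = G 0 (α 0) := fun k => tendsto_nhds_unique (hlim k) (hlim 0)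
  refine ⟨G 0 (α 0), hsub 0 (σ 0) (mem_range_self (α 0)), fun n => ⟨range (G n), ?_, hDn n (σ n)⟩⟩
  exact heq n ▸ mem_range_self _

/-! ### The ideal of small sets of pairs -/

/-- A set of pairs is small if countably many invariant Borel sets separate the two coordinates of
each of its elements. These sets form a `σ`-ideal, and smoothness of `E` means that the complement
of `E` belongs to it. -/
def SmallPairs {X : Type*} [MeasurableSpace X] (E : X → X → Prop) (S : Set (X × X)) : Prop :=
  ∃ B : ℕ → Set X, (∀ n, MeasurableSet (B n)) ∧ (∀ n x y, E x y → (x ∈ B n ↔ y ∈ B n)) ∧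
    ∀ p ∈ S, ∃ n, ¬ (p.1 ∈ B n ↔ p.2 ∈ B n)

theorem SmallPairs.empty {X : Type*} [MeasurableSpace X] {E : X → X → Prop} :
    SmallPairs E (∅ : Set (X × X)) :=
  ⟨fun _ => ∅, by simp, by simp, by simp⟩

theorem SmallPairs.iUnion {X : Type*} [MeasurableSpace X] {E : X → X → Prop} {ι : Type}
    [Countable ι] (S : ι → Set (X × X)) (T : Set (X × X)) (hS : ∀ i, SmallPairs E (S i))
    (hT : T ⊆ ⋃ i, S i) : SmallPairs E T := by
  cases isEmpty_or_nonempty ι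
  · have : T = ∅ := by simpa using hT
    exact this ▸ SmallPairs.empty
  choose B hBm hBi hBs using hS
  obtain ⟨e, he⟩ := exists_surjective_nat (ι × ℕ)
  refine ⟨fun n => B (e n).1 (e n).2, fun n => hBm _ _, fun n => hBi _ _, fun p hp => ?_⟩
  obtain ⟨i, hi⟩ := mem_iUnion.1 (hT hp)
  obtain ⟨m, hm⟩ := hBs i p hi
  obtain ⟨n, hn⟩ := he (i, m)
  exact ⟨n, by simpa [hn] using hm⟩

theorem SmallPairs.union {X : Type*} [MeasurableSpace X] {E : X → X → Prop}
    {S S' T : Set (X × X)} (hS : SmallPairs E S) (hS' : SmallPairs E S') (hT : T ⊆ S ∪ S') :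
    SmallPairs E T :=
  SmallPairs.iUnion (fun b : Bool => cond b S S') T (by rintro (_ | _) <;> assumption)
    (by rwa [← union_eq_iUnion])

/-- An analytic non-small set has an analytic non-small subset avoiding a given small set: the small
set is contained in a small Borel set, whose removal keeps analyticity. -/
theorem SmallPairs.exists_avoiding {X : Type*} [TopologicalSpace X] [PolishSpace X]
    [MeasurableSpace X] [BorelSpace X] {E : X → X → Prop} {S R : Set (X × X)}
    (hS : AnalyticSet S) (hpos : ¬ SmallPairs E S) (hR : SmallPairs E R) :
    ∃ S' ⊆ S, AnalyticSet S' ∧ ¬ SmallPairs E S' ∧ Disjoint S' R := by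
  obtain ⟨B, hBm, hBi, hBs⟩ := hR
  let N : Set (X × X) := {p | ∃ n, ¬ (p.1 ∈ B n ↔ p.2 ∈ B n)}
  have hN : MeasurableSet N := by
    simp only [N, ofPred_exists]
    exact MeasurableSet.iUnion fun n => (((hBm n).preimage measurable_fst).mem.iff
      ((hBm n).preimage measurable_snd).mem).not.setOf
  have hNs : SmallPairs E N := ⟨B, hBm, hBi, fun p hp => hp⟩
  refine ⟨S ∩ Nᶜ, inter_subset_left, analyticSet_inter hS hN.compl.analyticSet, fun h => hpos ?_, ?_⟩
  · refine h.union hNs fun p hp => ?_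
    by_cases hpN : p ∈ N
    · exact Or.inr hpN
    · exact Or.inl ⟨hp, hpN⟩
  · exact Set.disjoint_left.2 fun p hp hpR => hp.2 (hBs p hpR)

/-- Every analytic non-small set of pairs can be shrunk so as to decide, in the same way for both
coordinates, membership in a given invariant analytic set. -/
theorem SmallPairs.exists_deciding {X : Type*} [TopologicalSpace X] [PolishSpace X]
    [MeasurableSpace X] [BorelSpace X] {E : X → X → Prop} (hE : Equivalence E)
    (hBorel : MeasurableSet {p : X × X | E p.1 p.2}) {A : Set X}
    (hA : AnalyticSet A) (hAinv : ∀ x y, E x y → y ∈ A → x ∈ A) {S : Set (X × X)}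
    (hS : AnalyticSet S) (hpos : ¬ SmallPairs E S) :
    ∃ S' ⊆ S, AnalyticSet S' ∧ ¬ SmallPairs E S' ∧ ∀ p ∈ S', (p.1 ∈ A ↔ p.2 ∈ A) := by
  have hA1 : AnalyticSet (Prod.fst ⁻¹' A : Set (X × X)) := hA.preimage continuous_fst
  have hA2 : AnalyticSet (Prod.snd ⁻¹' A : Set (X × X)) := hA.preimage continuous_snd
  by_cases hbig : SmallPairs E (S ∩ (Prod.fst ⁻¹' A ∩ Prod.snd ⁻¹' A))
  swap
  · exact ⟨_, inter_subset_left, analyticSet_inter hS (analyticSet_inter hA1 hA2), hbig,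
      fun p hp => ⟨fun _ => hp.2.2, fun _ => hp.2.1⟩⟩
  obtain ⟨S₁, hS₁, hS₁a, hS₁p, hS₁d⟩ := SmallPairs.exists_avoiding hS hpos hbig
  have hno : ∀ p ∈ S₁, p.1 ∈ A → p.2 ∉ A := fun p hp h1 h2 =>
    Set.disjoint_left.1 hS₁d hp ⟨hS₁ hp, h1, h2⟩
  -- a pair with exactly one coordinate in `A` is separated by an invariant Borel set
  obtain ⟨B, hBm, hBi, hBA, hBd⟩ := exists_invariant_separation hE hBorel hA hAinv
    ((analyticSet_inter hS₁a hA1).image_of_continuous continuous_snd) (by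
      rw [Set.disjoint_left]
      rintro _ hx ⟨p, hp, rfl⟩
      exact hno p hp.1 hp.2 hx)
  obtain ⟨B', hBm', hBi', hBA', hBd'⟩ := exists_invariant_separation hE hBorel hA hAinv
    ((analyticSet_inter hS₁a hA2).image_of_continuous continuous_fst) (by
      rw [Set.disjoint_left]
      rintro _ hx ⟨p, hp, rfl⟩
      exact hno p hp.1 hx hp.2)
  have hs : SmallPairs E (S₁ ∩ Prod.fst ⁻¹' A) := ⟨fun _ => B, fun _ => hBm, fun _ => hBi,
    fun p hp => ⟨0, fun h =>
      Set.disjoint_left.1 hBd (h.1 (hBA hp.2)) (mem_image_of_mem _ hp)⟩⟩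
  have hs' : SmallPairs E (S₁ ∩ Prod.snd ⁻¹' A) := ⟨fun _ => B', fun _ => hBm', fun _ => hBi',
    fun p hp => ⟨0, fun h =>
      Set.disjoint_left.1 hBd' (h.2 (hBA' hp.2)) (mem_image_of_mem _ hp)⟩⟩
  obtain ⟨S₂, hS₂, hS₂a, hS₂p, hS₂d⟩ :=
    SmallPairs.exists_avoiding hS₁a hS₁p (hs.union hs' subset_rfl)
  refine ⟨S₂, hS₂.trans hS₁, hS₂a, hS₂p, fun p hp => iff_of_false (fun h => ?_) fun h => ?_⟩
  · exact Set.disjoint_left.1 hS₂d hp (Or.inl ⟨hS₂ hp, h⟩)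
  · exact Set.disjoint_left.1 hS₂d hp (Or.inr ⟨hS₂ hp, h⟩)

/-! ### Smoothness -/

/-- a Borel equivalence relation on a Polish space all of whose classes
are `G_δ` is smooth. -/
theorem statement12 {X : Type*} [TopologicalSpace X] [PolishSpace X]
    [MeasurableSpace X] [BorelSpace X]
    (E : X → X → Prop) (hE : Equivalence E)
    (hBorel : MeasurableSet {p : X × X | E p.1 p.2})
    (hGδ : ∀ x : X, IsGδ {y | E x y}) :
    ∃ f : X → (ℕ → Bool), Measurable f ∧ ∀ x y : X, (E x y ↔ f x = f y) := by
  suffices hsmall : SmallPairs E {p : X × X | E p.1 p.2}ᶜ by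
    classical
    obtain ⟨B, hBm, hBi, hBs⟩ := hsmall
    refine ⟨fun x n => decide (x ∈ B n), measurable_pi_lambda _ fun n =>
      measurable_to_bool (by convert hBm n using 1; ext x; simp), fun x y => ⟨fun h => ?_, fun h => ?_⟩⟩
    · funext n
      exact decide_eq_decide.2 (hBi n x y h)
    · by_contra hxy
      obtain ⟨n, hn⟩ := hBs (x, y) hxy
      exact hn (decide_eq_decide.1 (congrFun h n))
  by_contra hpos
  obtain ⟨b, hbc, -, hb⟩ := TopologicalSpace.exists_countable_basis X
  obtain ⟨U, hU⟩ := (hbc.insert ∅).exists_eq_range (insert_nonempty _ _)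
  have hUb : TopologicalSpace.IsTopologicalBasis (range U) := hU ▸ hb.insert_empty
  have hUo : ∀ n, IsOpen (U n) := fun n => hUb.isOpen (mem_range_self n)
  obtain ⟨⟨x, y⟩, hxy, hdec⟩ := exists_fusion (small := SmallPairs E) SmallPairs.empty
    SmallPairs.iUnion
    (fun n S => ∀ p ∈ S, (p.1 ∈ {x | ∃ a ∈ U n, E x a} ↔ p.2 ∈ {x | ∃ a ∈ U n, E x a}))
    (fun n S hS hp => SmallPairs.exists_deciding hE hBorel
      (analytic_saturation hBorel (hUo n).measurableSet.analyticSet)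
      (fun x y hxy ⟨a, ha, hya⟩ => ⟨a, ha, hE.trans hxy hya⟩) hS hp)
    hBorel.compl.analyticSet hpos
  have hcl : closure {z | E x z} = closure {z | E y z} := by
    ext w
    rw [hUb.mem_closure_iff, hUb.mem_closure_iff]
    refine forall₂_congr fun o ho => imp_congr_right fun _ => ?_
    obtain ⟨n, rfl⟩ := ho
    obtain ⟨S, hzS, hS⟩ := hdec n
    exact hS _ hzS
  obtain ⟨z, hxz, hyz⟩ := exists_mem_inter_of_isGδ (hGδ x) (hGδ y) ⟨x, hE.refl x⟩ hcl
  exact hxy (hE.trans hxz (hE.symm hyz))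
end
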